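/- Let S₁ and S₂ be two irreducible reduced cones in Pⁿ over an algebraically closed field of characteristic zero, and let C₁ and C₂ be their respective general hyperplane sections. If C₁ is birational to C₂ (as abstract varieties), then S₁ is Cremona equivalent to S₂. -/

import Mathlib

/-!
Concrete framework: projective space over a field `k` as `Projectivization`,
hypersurfaces as zero loci of homogeneous polynomials, rational maps given by
tuples of homogeneous polynomials, birational maps between (closed) subvarieties,
and Cremona equivalence of divisors.
-/

open MvPolynomial

/-- Projective `n`-space over `k`, as the projectivization of `k^{n+1}`. -/
abbrev ProjSp (k : Type) [Field k] (n : ℕ) : Type :=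
  Projectivization k (Fin (n + 1) → k)

namespace ProjSp

variable (k : Type) [Field k]

/-- The zero locus in `ℙⁿ` of a (homogeneous) polynomial. -/
def zeros {n : ℕ} (f : MvPolynomial (Fin (n + 1)) k) : Set (ProjSp k n) :=
  {x | eval x.rep f = 0}

/-- `D ⊆ ℙⁿ` is an irreducible and reduced divisor (hypersurface): it is the zero
locus of an irreducible homogeneous polynomial of positive degree. -/
def IsIrredDivisor {n : ℕ} (D : Set (ProjSp k n)) : Prop :=
  ∃ (d : ℕ) (f : MvPolynomial (Fin (n + 1)) k),
    0 < d ∧ f.IsHomogeneous d ∧ Irreducible f ∧ D = zeros k f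

/-- A hyperplane in `ℙⁿ`: the zero locus of a nonzero linear form. -/
def IsHyperplane {n : ℕ} (H : Set (ProjSp k n)) : Prop :=
  ∃ f : MvPolynomial (Fin (n + 1)) k, f ≠ 0 ∧ f.IsHomogeneous 1 ∧ H = zeros k f

/-- The line through two points of `ℙⁿ` (the set of points whose representing line
lies in the plane spanned by the two points). -/
def lineThrough {n : ℕ} (p q : ProjSp k n) : Set (ProjSp k n) :=
  {z | z.submodule ≤ p.submodule ⊔ q.submodule}

/-- `S` is a cone with vertex `p`: `p ∈ S` and `S` is a union of lines through `p`.
For an irreducible divisor of degree `d` this is equivalent to `p` being a point of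
multiplicity `d` on `S`. -/
def IsConeWithVertex {n : ℕ} (S : Set (ProjSp k n)) (p : ProjSp k n) : Prop :=
  p ∈ S ∧ ∀ x ∈ S, lineThrough k p x ⊆ S

/-- The cone with vertex `p` over a set `A ⊆ ℙⁿ`: the union of the lines joining `p`
to the points of `A`. -/
def coneOver {n : ℕ} (p : ProjSp k n) (A : Set (ProjSp k n)) : Set (ProjSp k n) :=
  ⋃ a ∈ A, lineThrough k p a

/-- The data of a rational map `ℙⁿ ⇢ ℙᵐ`: an `(m+1)`-tuple of homogeneous polynomials
of a common degree in `n+1` variables. -/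
structure RatMap (n m : ℕ) where
  deg : ℕ
  comp : Fin (m + 1) → MvPolynomial (Fin (n + 1)) k
  homog : ∀ i, (comp i).IsHomogeneous deg

variable {k}

/-- The rational map is defined at `x` if not all of its components vanish at `x`. -/
def RatMap.Defined {n m : ℕ} (F : RatMap k n m) (x : ProjSp k n) : Prop :=
  (fun i => eval x.rep (F.comp i)) ≠ 0

open scoped Classical in
/-- The value of a rational map at a point (junk value where undefined). -/
noncomputable def RatMap.app {n m : ℕ} (F : RatMap k n m) (x : ProjSp k n) :
    ProjSp k m :=
  if h : (fun i => eval x.rep (F.comp i)) ≠ 0 then Projectivization.mk k _ h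
  else Classical.arbitrary _

variable (k)

/-- `F` (with inverse `G`) restricts to a birational map from `A ⊆ ℙⁿ` onto `B ⊆ ℙᵐ`:
there are hypersurface complements, each meeting `A` resp. `B`, on which `F` and `G`
are defined, map `A` into `B` (resp. `B` into `A`) and are mutually inverse.  For
irreducible closed `A`, `B` this says exactly that `F` induces a birational map
`A ⇢ B`, i.e. that the strict transform (proper image) of `A` under `F` is `B`. -/
def IsBirationalOn {n m : ℕ} (F : RatMap k n m) (G : RatMap k m n)
    (A : Set (ProjSp k n)) (B : Set (ProjSp k m)) : Prop :=
  ∃ (u : MvPolynomial (Fin (n + 1)) k) (v : MvPolynomial (Fin (m + 1)) k)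
    (du dv : ℕ), u.IsHomogeneous du ∧ v.IsHomogeneous dv ∧
    ¬ A ⊆ zeros k u ∧ ¬ B ⊆ zeros k v ∧
    (∀ x ∈ A \ zeros k u,
      F.Defined x ∧ F.app x ∈ B ∧ G.Defined (F.app x) ∧ G.app (F.app x) = x) ∧
    (∀ y ∈ B \ zeros k v,
      G.Defined y ∧ G.app y ∈ A ∧ F.Defined (G.app y) ∧ F.app (G.app y) = y)

/-- `A ⊆ ℙⁿ` and `B ⊆ ℙᵐ` are birational (as abstract varieties). -/
def Birational {n m : ℕ} (A : Set (ProjSp k n)) (B : Set (ProjSp k m)) : Prop :=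
  ∃ (F : RatMap k n m) (G : RatMap k m n), IsBirationalOn k F G A B

/-- Two divisors `D, D' ⊆ ℙⁿ` are Cremona equivalent: there is a birational self-map
`Φ` of `ℙⁿ` (a Cremona transformation) whose strict transform of `D` is `D'`,
i.e. `Φ` restricts to a birational map from `D` onto `D'`. -/
def CremonaEquivalent {n : ℕ} (D D' : Set (ProjSp k n)) : Prop :=
  ∃ (F : RatMap k n n) (G : RatMap k n n),
    IsBirationalOn k F G Set.univ Set.univ ∧ IsBirationalOn k F G D D'

/-- `C` is a rational variety: it is birational to some projective space. -/
def IsRationalVariety {n : ℕ} (C : Set (ProjSp k n)) : Prop :=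
  ∃ m : ℕ, Birational k C (Set.univ : Set (ProjSp k m))

end ProjSp

open ProjSp

/-!
In suitable coordinates the cone over `C = {X₀ = g = 0} ⊆ {X₀ = 0}` is `{g = 0}`. The Cremona map
`(X₀ : X') ↦ (g X₀ : L X')`, with `L` a form of the same degree as `g` not divisible by `g`,
contracts this cone onto `C`; equivalently, the cone is the exceptional divisor of the blow-up
of `C`. Hence a Cremona map that is a local isomorphism at the generic point of `C₁` and sends it
to the generic point of `C₂`, conjugated by the two contractions, carries the first cone to the
second.

Such a map exists because `C₁` and `C₂` have codimension at least two: a birational map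
`C₁ ⇢ C₂` turns one tuple of generators of the function field into another, and one coordinate at
a time may be translated by a rational function of the others as long as the others still generate
the function field. Transcendence bases exchanged one element at a time, each completed by a
primitive element, connect any two such tuples.
-/

namespace Cremona

section Homogeneous

variable {k ι A : Type*} [Field k] [CommRing A] [Algebra k A]

theorem aeval_eq_pow_mul_aeval {d : ℕ} {h : MvPolynomial ι k} (hh : h.IsHomogeneous d) {c : A}
    {x y : ι → A} (hy : ∀ i, y i = c * x i) : aeval y h = c ^ d * aeval x h := by
  simp only [aeval_def, eval₂_eq, Finset.mul_sum]
  refine Finset.sum_congr rfl fun m hm => ?_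
  have hdeg : ∑ i ∈ m.support, m i = d := (hh.degree_eq_sum_deg_support hm).symm
  simp only [hy, mul_pow, Finset.prod_mul_distrib, Finset.prod_pow_eq_pow_sum, hdeg]
  ring

theorem isHomogeneous_right_of_mul {d e : ℕ} {f g : MvPolynomial ι k} (hf : f.IsHomogeneous d)
    (hf0 : f ≠ 0) (hfg : (f * g).IsHomogeneous e) : g.IsHomogeneous (e - d) := by
  classical
  let _ := MvPolynomial.gradedAlgebra (σ := ι) (R := k)
  obtain rfl | hg := eq_or_ne g 0
  · exact isHomogeneous_zero _ _ _
  have hf' := (mem_homogeneousSubmodule d f).2 hf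
  have decompose_mul := DirectSum.decompose_of_mem_same (homogeneousSubmodule ι k)
    ((mem_homogeneousSubmodule _ _).2 hfg)
  obtain hde | hde := em (d ≤ e)
  · rw [DirectSum.coe_decompose_mul_of_left_mem_of_le _ hf' hde] at decompose_mul
    rw [← mul_left_cancel₀ hf0 decompose_mul]
    exact (mem_homogeneousSubmodule _ _).1 (SetLike.coe_mem _)
  · rw [DirectSum.coe_decompose_mul_of_left_mem_of_not_le _ hf' hde] at decompose_mul
    exact absurd decompose_mul.symm (mul_ne_zero hf0 hg)

end Homogeneous

/-- A Cremona transformation of the projective space with coordinates indexed by `ι`: two tuples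
of forms which are inverse to each other up to the common factors `factor` and `invFactor`. The
components of a tuple may have a common divisor. -/
structure CremonaMap (k ι : Type*) [Field k] where
  toFun : ι → MvPolynomial ι k
  invFun : ι → MvPolynomial ι k
  deg : ℕ
  invDeg : ℕ
  factor : MvPolynomial ι k
  invFactor : MvPolynomial ι k
  isHomogeneous_toFun : ∀ i, (toFun i).IsHomogeneous deg
  isHomogeneous_invFun : ∀ i, (invFun i).IsHomogeneous invDeg
  factor_ne_zero : factor ≠ 0
  invFactor_ne_zero : invFactor ≠ 0
  aeval_toFun_invFun : ∀ i, aeval toFun (invFun i) = factor * X i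
  aeval_invFun_toFun : ∀ i, aeval invFun (toFun i) = invFactor * X i

namespace CremonaMap

variable {k ι : Type*} [Field k]

/-- Substitution of the components of a Cremona transformation into a polynomial. -/
noncomputable def pullback (Φ : CremonaMap k ι) : MvPolynomial ι k →ₐ[k] MvPolynomial ι k :=
  aeval Φ.toFun

@[simp]
theorem pullback_X (Φ : CremonaMap k ι) (i : ι) : Φ.pullback (X i) = Φ.toFun i := aeval_X _ _

/-- The inverse Cremona transformation. -/
@[simps]
def symm (Φ : CremonaMap k ι) : CremonaMap k ι where
  toFun := Φ.invFun
  invFun := Φ.toFun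
  deg := Φ.invDeg
  invDeg := Φ.deg
  factor := Φ.invFactor
  invFactor := Φ.factor
  isHomogeneous_toFun := Φ.isHomogeneous_invFun
  isHomogeneous_invFun := Φ.isHomogeneous_toFun
  factor_ne_zero := Φ.invFactor_ne_zero
  invFactor_ne_zero := Φ.factor_ne_zero
  aeval_toFun_invFun := Φ.aeval_invFun_toFun
  aeval_invFun_toFun := Φ.aeval_toFun_invFun

variable (Φ Ψ : CremonaMap k ι) {d : ℕ} {h : MvPolynomial ι k}

theorem pullback_isHomogeneous (hh : h.IsHomogeneous d) :
    (Φ.pullback h).IsHomogeneous (Φ.deg * d) :=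
  hh.aeval _ Φ.isHomogeneous_toFun

theorem pullback_symm_pullback (hh : h.IsHomogeneous d) :
    Φ.pullback (Φ.symm.pullback h) = Φ.factor ^ d * h := by
  simp only [pullback, comp_aeval_apply, symm_toFun]
  rw [aeval_eq_pow_mul_aeval hh Φ.aeval_toFun_invFun, aeval_X_left_apply]

theorem symm_pullback_pullback (hh : h.IsHomogeneous d) :
    Φ.symm.pullback (Φ.pullback h) = Φ.invFactor ^ d * h :=
  Φ.symm.pullback_symm_pullback hh

theorem pullback_ne_zero (hh : h.IsHomogeneous d) (h0 : h ≠ 0) : Φ.pullback h ≠ 0 := by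
  intro hzero
  have key := Φ.symm_pullback_pullback hh
  rw [hzero, map_zero] at key
  exact mul_ne_zero (pow_ne_zero d Φ.invFactor_ne_zero) h0 key.symm

theorem exists_isHomogeneous_factor : ∃ w, Φ.factor.IsHomogeneous w := by
  obtain _ | ⟨⟨i⟩⟩ := isEmpty_or_nonempty ι
  · exact ⟨0, isHomogeneous_of_isEmpty _ _ _⟩
  · have hmul := Φ.pullback_isHomogeneous (Φ.isHomogeneous_invFun i)
    rw [pullback, Φ.aeval_toFun_invFun, mul_comm] at hmul
    exact ⟨_, isHomogeneous_right_of_mul (isHomogeneous_X k i) (X_ne_zero i) hmul⟩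

theorem trans_factor_ne_zero : Φ.pullback Ψ.factor ^ Φ.invDeg * Φ.factor ≠ 0 :=
  have ⟨_, hw⟩ := Ψ.exists_isHomogeneous_factor
  mul_ne_zero (pow_ne_zero _ (Φ.pullback_ne_zero hw Ψ.factor_ne_zero)) Φ.factor_ne_zero

theorem trans_aeval_toFun_invFun (i : ι) :
    aeval (fun j => Φ.pullback (Ψ.toFun j)) (Ψ.symm.pullback (Φ.invFun i)) =
      Φ.pullback Ψ.factor ^ Φ.invDeg * Φ.factor * X i := by
  have key := congrArg Φ.pullback (Ψ.pullback_symm_pullback (Φ.isHomogeneous_invFun i))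
  rw [map_mul, map_pow] at key
  rw [mul_assoc, ← Φ.aeval_toFun_invFun, ← pullback, ← key]
  exact (comp_aeval_apply Ψ.toFun Φ.pullback _).symm

/-- The composition of two Cremona transformations, `Φ` being applied first. -/
@[simps]
noncomputable def trans : CremonaMap k ι where
  toFun j := Φ.pullback (Ψ.toFun j)
  invFun j := Ψ.symm.pullback (Φ.invFun j)
  deg := Φ.deg * Ψ.deg
  invDeg := Ψ.invDeg * Φ.invDeg
  factor := Φ.pullback Ψ.factor ^ Φ.invDeg * Φ.factor
  invFactor := Ψ.symm.pullback Φ.invFactor ^ Ψ.deg * Ψ.invFactor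
  isHomogeneous_toFun j := Φ.pullback_isHomogeneous (Ψ.isHomogeneous_toFun j)
  isHomogeneous_invFun j := Ψ.symm.pullback_isHomogeneous (Φ.isHomogeneous_invFun j)
  factor_ne_zero := Φ.trans_factor_ne_zero Ψ
  invFactor_ne_zero := Ψ.symm.trans_factor_ne_zero Φ.symm
  aeval_toFun_invFun := Φ.trans_aeval_toFun_invFun Ψ
  aeval_invFun_toFun := Ψ.symm.trans_aeval_toFun_invFun Φ.symm

@[simp]
theorem symm_trans : (Φ.trans Ψ).symm = Ψ.symm.trans Φ.symm := rfl

theorem pullback_trans (h : MvPolynomial ι k) :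
    (Φ.trans Ψ).pullback h = Φ.pullback (Ψ.pullback h) :=
  (comp_aeval_apply Ψ.toFun Φ.pullback h).symm

/-- The Cremona transformation permuting the coordinates by `σ`. -/
@[simps]
noncomputable def ofPerm (σ : Equiv.Perm ι) : CremonaMap k ι where
  toFun i := X (σ i)
  invFun i := X (σ.symm i)
  deg := 1
  invDeg := 1
  factor := 1
  invFactor := 1
  isHomogeneous_toFun _ := isHomogeneous_X k _
  isHomogeneous_invFun _ := isHomogeneous_X k _
  factor_ne_zero := one_ne_zero
  invFactor_ne_zero := one_ne_zero
  aeval_toFun_invFun := by simp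
  aeval_invFun_toFun := by simp

/-- The projectivity `v ↦ T v` of an invertible matrix. -/
@[simps]
noncomputable def ofGL [Fintype ι] [DecidableEq ι] (T : GL ι k) : CremonaMap k ι where
  toFun := T.val.toMvPolynomial
  invFun := T⁻¹.val.toMvPolynomial
  deg := 1
  invDeg := 1
  factor := 1
  invFactor := 1
  isHomogeneous_toFun := T.val.toMvPolynomial_isHomogeneous
  isHomogeneous_invFun := T⁻¹.val.toMvPolynomial_isHomogeneous
  factor_ne_zero := one_ne_zero
  invFactor_ne_zero := one_ne_zero
  aeval_toFun_invFun i := by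
    rw [one_mul, ← bind₁, ← Matrix.toMvPolynomial_mul, ← Units.val_mul, inv_mul_cancel,
      Units.val_one, Matrix.toMvPolynomial_one]
  aeval_invFun_toFun i := by
    rw [one_mul, ← bind₁, ← Matrix.toMvPolynomial_mul, ← Units.val_mul, mul_inv_cancel,
      Units.val_one, Matrix.toMvPolynomial_one]

end CremonaMap

namespace CremonaMap

variable {k ι K : Type*} [Field k] [Field K] [Algebra k K] {Φ Ψ : CremonaMap k ι}
  {ξ η ζ : ι → K} {d : ℕ} {q : MvPolynomial ι k}

/-- `Φ` is defined at the point with homogeneous coordinates `ξ` and maps it to the point with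
homogeneous coordinates `η`. -/
def SendsPoint (Φ : CremonaMap k ι) (ξ η : ι → K) : Prop :=
  ∃ c : K, c ≠ 0 ∧ ∀ j, aeval ξ (Φ.toFun j) = c * η j

theorem SendsPoint.exists_aeval_pullback (H : Φ.SendsPoint ξ η) :
    ∃ c : K, c ≠ 0 ∧ ∀ ⦃d : ℕ⦄ ⦃q : MvPolynomial ι k⦄, q.IsHomogeneous d →
      aeval ξ (Φ.pullback q) = c ^ d * aeval η q := by
  obtain ⟨c, hc, hcη⟩ := H
  exact ⟨c, hc, fun d q hq => by
    rw [pullback, comp_aeval_apply, aeval_eq_pow_mul_aeval hq hcη]⟩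

theorem SendsPoint.aeval_pullback_eq_zero_iff (H : Φ.SendsPoint ξ η) (hq : q.IsHomogeneous d) :
    aeval ξ (Φ.pullback q) = 0 ↔ aeval η q = 0 := by
  obtain ⟨c, hc, hpull⟩ := H.exists_aeval_pullback
  rw [hpull hq, mul_eq_zero, or_iff_right (pow_ne_zero d hc)]

theorem SendsPoint.trans (H : Φ.SendsPoint ξ η) (H' : Ψ.SendsPoint η ζ) :
    (Φ.trans Ψ).SendsPoint ξ ζ := by
  obtain ⟨c, hc, hpull⟩ := H.exists_aeval_pullback
  obtain ⟨c', hc', hcζ⟩ := H'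
  refine ⟨c ^ Ψ.deg * c', mul_ne_zero (pow_ne_zero _ hc) hc', fun j => ?_⟩
  rw [trans_toFun, hpull (Ψ.isHomogeneous_toFun j), hcζ, mul_assoc]

theorem SendsPoint.aeval_factor_ne_zero (H : Φ.SendsPoint ξ η) (H' : Φ.symm.SendsPoint η ξ)
    (hξ : ξ ≠ 0) : aeval ξ Φ.factor ≠ 0 := by
  obtain ⟨c, hc, hpull⟩ := H.exists_aeval_pullback
  obtain ⟨c', hc', hcξ⟩ := H'
  obtain ⟨i, hi⟩ := Function.ne_iff.1 hξ
  have key : aeval ξ Φ.factor * ξ i = c ^ Φ.invDeg * (c' * ξ i) := by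
    rw [← hcξ, symm_toFun, ← hpull (Φ.isHomogeneous_invFun i), pullback, Φ.aeval_toFun_invFun,
      map_mul, aeval_X]
  refine left_ne_zero_of_mul (b := ξ i) ?_
  rw [key]
  exact mul_ne_zero (pow_ne_zero _ hc) (mul_ne_zero hc' hi)

end CremonaMap

section PointEquiv

variable {k ι K : Type*} [Field k] [Field K] [Algebra k K] {ξ η ζ : ι → K}

variable (k) in
/-- Some Cremona transformation over `k` is a local isomorphism carrying the `K`-point `ξ` to the
`K`-point `η`. -/
def PointEquiv (ξ η : ι → K) : Prop :=
  ∃ Φ : CremonaMap k ι, Φ.SendsPoint ξ η ∧ Φ.symm.SendsPoint η ξ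

theorem PointEquiv.symm : PointEquiv k ξ η → PointEquiv k η ξ :=
  fun ⟨Φ, h, h'⟩ => ⟨Φ.symm, h', h⟩

theorem PointEquiv.trans (H : PointEquiv k ξ η) (H' : PointEquiv k η ζ) : PointEquiv k ξ ζ := by
  obtain ⟨Φ, hΦ, hΦ'⟩ := H
  obtain ⟨Ψ, hΨ, hΨ'⟩ := H'
  refine ⟨Φ.trans Ψ, hΦ.trans hΨ, ?_⟩
  rw [CremonaMap.symm_trans]
  exact hΨ'.trans hΦ'

theorem PointEquiv.comp_perm (ξ : ι → K) (σ : Equiv.Perm ι) : PointEquiv k ξ (ξ ∘ σ) :=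
  ⟨.ofPerm σ, ⟨1, one_ne_zero, by simp⟩, ⟨1, one_ne_zero, by simp⟩⟩

theorem PointEquiv.refl (ξ : ι → K) : PointEquiv k ξ ξ :=
  PointEquiv.comp_perm ξ 1

theorem PointEquiv.smul_right (h : PointEquiv k ξ η) {c : K} (hc : c ≠ 0) :
    PointEquiv k ξ (c • η) := by
  obtain ⟨Φ, ⟨a, ha, haη⟩, ⟨b, hb, hbξ⟩⟩ := h
  refine ⟨Φ, ⟨a * c⁻¹, by positivity, fun j => ?_⟩, ⟨c ^ Φ.invDeg * b, by positivity, fun j => ?_⟩⟩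
  · rw [haη, Pi.smul_apply, smul_eq_mul, mul_assoc, inv_mul_cancel_left₀ hc]
  · rw [aeval_eq_pow_mul_aeval (Φ.symm.isHomogeneous_toFun j) (y := c • η) (fun _ => rfl), hbξ,
      mul_assoc, CremonaMap.symm_deg]

end PointEquiv

namespace CremonaMap

variable {k ι : Type*} [Field k] {Φ Ψ : CremonaMap k ι} {f g f' : MvPolynomial ι k}

/-- `Φ` maps the generic point of the hypersurface `f = 0` to the generic point of the hypersurface
`f' = 0`, for prime forms `f` and `f'`. -/
def MapsDivisor (Φ : CremonaMap k ι) (f f' : MvPolynomial ι k) : Prop :=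
  ∀ ⦃d : ℕ⦄ ⦃h : MvPolynomial ι k⦄, h.IsHomogeneous d → (f ∣ Φ.pullback h ↔ f' ∣ h)

theorem MapsDivisor.trans (H : Φ.MapsDivisor f g) (H' : Ψ.MapsDivisor g f') :
    (Φ.trans Ψ).MapsDivisor f f' := fun d h hh => by
  rw [pullback_trans, H (Ψ.pullback_isHomogeneous hh), H' hh]

theorem MapsDivisor.not_dvd_factor (H : Φ.MapsDivisor f f') (H' : Φ.symm.MapsDivisor f' f) {i : ι}
    (hi : ¬ f ∣ X i) : ¬ f ∣ Φ.factor := by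
  intro hdvd
  have hdvd_pull : f ∣ Φ.pullback (Φ.invFun i) := by
    rw [pullback, Φ.aeval_toFun_invFun]
    exact hdvd.mul_right _
  refine hi ((H' (isHomogeneous_X k i)).1 ?_)
  rw [pullback, aeval_X]
  exact (H (Φ.isHomogeneous_invFun i)).1 hdvd_pull

end CremonaMap

section DivisorEquiv

variable {k ι : Type*} [Field k] {f g f' : MvPolynomial ι k}

/-- The hypersurfaces `f = 0` and `f' = 0` correspond to each other under a Cremona transformation,
for prime forms `f` and `f'`. -/
def DivisorEquiv (f f' : MvPolynomial ι k) : Prop :=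
  ∃ Φ : CremonaMap k ι, Φ.MapsDivisor f f' ∧ Φ.symm.MapsDivisor f' f

theorem DivisorEquiv.symm : DivisorEquiv f f' → DivisorEquiv f' f :=
  fun ⟨Φ, h, h'⟩ => ⟨Φ.symm, h', h⟩

theorem DivisorEquiv.trans (H : DivisorEquiv f g) (H' : DivisorEquiv g f') :
    DivisorEquiv f f' := by
  obtain ⟨Φ, hΦ, hΦ'⟩ := H
  obtain ⟨Ψ, hΨ, hΨ'⟩ := H'
  refine ⟨Φ.trans Ψ, hΦ.trans hΨ, ?_⟩
  rw [CremonaMap.symm_trans]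
  exact hΨ'.trans hΦ'

end DivisorEquiv

section CommonFactors

variable {k ι : Type*} [Field k]

theorem dvd_of_dvd_mul_X_of_dvd_mul_X {i j : ι} (hij : i ≠ j) {c W : MvPolynomial ι k}
    (hc : c ≠ 0) (hi : c ∣ W * X i) (hj : c ∣ W * X j) : c ∣ W := by
  obtain ⟨a, ha⟩ := hi
  obtain ⟨b, hb⟩ := hj
  have hcross : X j * a = X i * b := mul_left_cancel₀ hc (by linear_combination X i * hb - X j * ha)
  have hdvd : X i ∣ a :=
    (X_prime.dvd_mul.1 (Dvd.intro _ hcross.symm)).resolve_left fun h => hij (X_dvd_X.1 h)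
  obtain ⟨a, rfl⟩ := hdvd
  exact ⟨a, mul_right_cancel₀ (X_ne_zero i) (by linear_combination ha)⟩

namespace CremonaMap

variable (Φ : CremonaMap k ι) {P Q : MvPolynomial ι k}

theorem exists_aeval_eq_mul_X [Nontrivial ι] {F G : ι → MvPolynomial ι k}
    (hF : ∀ i, Φ.toFun i = P * F i) (hG : ∀ i, Φ.invFun i = Q * G i) :
    ∃ W ≠ 0, ∀ i, aeval F (G i) = W * X i := by
  have key (i : ι) : P ^ Φ.invDeg * aeval F Q * aeval F (G i) = Φ.factor * X i := by
    rw [← Φ.aeval_toFun_invFun, aeval_eq_pow_mul_aeval (Φ.isHomogeneous_invFun i) hF, hG, map_mul,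
      mul_assoc]
  obtain ⟨i, j, hij⟩ := exists_pair_ne ι
  have hne (i : ι) : Φ.factor * X i ≠ 0 := mul_ne_zero Φ.factor_ne_zero (X_ne_zero i)
  have hc : P ^ Φ.invDeg * aeval F Q ≠ 0 := left_ne_zero_of_mul ((key i).trans_ne (hne i))
  obtain ⟨W, hW⟩ :=
    dvd_of_dvd_mul_X_of_dvd_mul_X hij hc (Dvd.intro _ (key i)) (Dvd.intro _ (key j))
  have haeval (i : ι) : aeval F (G i) = W * X i :=
    mul_left_cancel₀ hc (by rw [key, hW, mul_assoc])
  refine ⟨W, ?_, haeval⟩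
  rintro rfl
  exact Φ.factor_ne_zero (by rw [hW, mul_zero])

theorem exists_eq_mul_of_dvd [Nontrivial ι] {a b : ℕ} (hP : P.IsHomogeneous a)
    (hQ : Q.IsHomogeneous b) (hP0 : P ≠ 0) (hQ0 : Q ≠ 0)
    (hPΦ : ∀ i, P ∣ Φ.toFun i) (hQΦ : ∀ i, Q ∣ Φ.invFun i) :
    ∃ Φ' : CremonaMap k ι,
      (∀ i, Φ.toFun i = P * Φ'.toFun i) ∧ ∀ i, Φ.invFun i = Q * Φ'.invFun i := by
  choose F hF using hPΦ
  choose G hG using hQΦ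
  obtain ⟨W, hW, hFG⟩ := Φ.exists_aeval_eq_mul_X hF hG
  obtain ⟨W', hW', hGF⟩ := Φ.symm.exists_aeval_eq_mul_X hG hF
  exact ⟨{  toFun := F
            invFun := G
            deg := Φ.deg - a
            invDeg := Φ.invDeg - b
            factor := W
            invFactor := W'
            isHomogeneous_toFun := fun i =>
              isHomogeneous_right_of_mul hP hP0 (hF i ▸ Φ.isHomogeneous_toFun i)
            isHomogeneous_invFun := fun i =>
              isHomogeneous_right_of_mul hQ hQ0 (hG i ▸ Φ.isHomogeneous_invFun i)
            factor_ne_zero := hW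
            invFactor_ne_zero := hW'
            aeval_toFun_invFun := hFG
            aeval_invFun_toFun := hGF }, hF, hG⟩

theorem mapsDivisor_of_toFun_eq_mul {Φ' : CremonaMap k ι} {f f' : MvPolynomial ι k} {r : ℕ}
    (hf : f ≠ 0) (hΦ' : ∀ i, Φ.toFun i = f ^ r * Φ'.toFun i)
    (H : ∀ ⦃d : ℕ⦄ ⦃h : MvPolynomial ι k⦄, h.IsHomogeneous d →
      (f ^ (r * d + 1) ∣ Φ.pullback h ↔ f' ∣ h)) : Φ'.MapsDivisor f f' := fun d h hh => by
  rw [← H hh, pullback, pullback, aeval_eq_pow_mul_aeval hh hΦ', ← pow_mul, pow_succ,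
    mul_dvd_mul_iff_left (pow_ne_zero _ hf)]

end CremonaMap

theorem DivisorEquiv.of_pow_dvd_pullback [Nontrivial ι] (Φ : CremonaMap k ι)
    {f f' : MvPolynomial ι k} {a a' r r' : ℕ} (hf : f.IsHomogeneous a) (hf' : f'.IsHomogeneous a')
    (hf0 : f ≠ 0) (hf0' : f' ≠ 0) (hr : ∀ i, f ^ r ∣ Φ.toFun i) (hr' : ∀ i, f' ^ r' ∣ Φ.invFun i)
    (H : ∀ ⦃d : ℕ⦄ ⦃h : MvPolynomial ι k⦄, h.IsHomogeneous d →
      (f ^ (r * d + 1) ∣ Φ.pullback h ↔ f' ∣ h))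
    (H' : ∀ ⦃d : ℕ⦄ ⦃h : MvPolynomial ι k⦄, h.IsHomogeneous d →
      (f' ^ (r' * d + 1) ∣ Φ.symm.pullback h ↔ f ∣ h)) : DivisorEquiv f f' := by
  obtain ⟨Φ', hΦ, hΦ'⟩ := Φ.exists_eq_mul_of_dvd (hf.pow r) (hf'.pow r') (pow_ne_zero _ hf0)
    (pow_ne_zero _ hf0') hr hr'
  exact ⟨Φ', Φ.mapsDivisor_of_toFun_eq_mul hf0 hΦ H,
    Φ.symm.mapsDivisor_of_toFun_eq_mul hf0' (Φ' := Φ'.symm) hΦ' H'⟩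

end CommonFactors

section Generates

variable {k K σ τ : Type*} [Field k] [Field K] [Algebra k K]

variable (k) in
/-- The quotients of forms of equal degree over `k` in the homogeneous coordinates `ξ` exhaust `K`,
that is, `K` is the function field of the projective variety with generic point `ξ`. -/
def Generates (ξ : σ → K) : Prop :=
  ∀ z : K, ∃ (d : ℕ) (a b : MvPolynomial σ k), a.IsHomogeneous d ∧ b.IsHomogeneous d ∧
    aeval ξ b ≠ 0 ∧ z * aeval ξ b = aeval ξ a

theorem Generates.of_adjoin_eq_top {ξ : σ → K} (h1 : 1 ∈ Set.range ξ)
    (hξ : IntermediateField.adjoin k (Set.range ξ) = ⊤) : Generates k ξ := fun z => by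
  have hz : z ∈ IntermediateField.adjoin k (Set.range ξ) := hξ ▸ IntermediateField.mem_top
  induction hz using IntermediateField.adjoin_induction with
  | mem z hz =>
    obtain ⟨i₀, hi₀⟩ := h1
    obtain ⟨i, rfl⟩ := hz
    exact ⟨1, X i, X i₀, isHomogeneous_X k _, isHomogeneous_X k _, by simp [hi₀], by simp [hi₀]⟩
  | algebraMap c =>
    exact ⟨0, C c, 1, isHomogeneous_C _ _, isHomogeneous_one _ _, by simp, by simp⟩
  | add z w _ _ hz hw =>
    obtain ⟨d, a, b, ha, hb, h0, h⟩ := hz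
    obtain ⟨d', a', b', ha', hb', h0', h'⟩ := hw
    refine ⟨d + d', a * b' + b * a', b * b', (ha.mul hb').add (hb.mul ha'), hb.mul hb', ?_, ?_⟩
    · simpa only [map_mul] using mul_ne_zero h0 h0'
    · simp only [map_add, map_mul, ← h, ← h']
      ring
  | inv z _ hz =>
    obtain ⟨d, a, b, ha, hb, h0, h⟩ := hz
    obtain rfl | hz0 := eq_or_ne z 0
    · exact ⟨0, 0, 1, isHomogeneous_zero _ _ _, isHomogeneous_one _ _, by simp, by simp⟩
    · exact ⟨d, b, a, hb, ha, h ▸ mul_ne_zero hz0 h0, by rw [← h, inv_mul_cancel_left₀ hz0]⟩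
  | mul z w _ _ hz hw =>
    obtain ⟨d, a, b, ha, hb, h0, h⟩ := hz
    obtain ⟨d', a', b', ha', hb', h0', h'⟩ := hw
    refine ⟨d + d', a * a', b * b', ha.mul ha', hb.mul hb', ?_, ?_⟩
    · simpa only [map_mul] using mul_ne_zero h0 h0'
    · simp only [map_mul, ← h, ← h']
      ring

theorem Generates.adjoin_eq_top {ξ : σ → K} (hξ : Generates k ξ) :
    IntermediateField.adjoin k (Set.range ξ) = ⊤ := by
  have haeval (p : MvPolynomial σ k) : aeval ξ p ∈ IntermediateField.adjoin k (Set.range ξ) :=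
    IntermediateField.algebra_adjoin_le_adjoin k _ (by
      rw [Algebra.adjoin_range_eq_range_aeval]
      exact AlgHom.mem_range_self _ _)
  refine eq_top_iff.2 fun z _ => ?_
  obtain ⟨d, a, b, -, -, hb, hz⟩ := hξ z
  rw [eq_div_of_mul_eq hb hz]
  exact div_mem (haeval a) (haeval b)

theorem Generates.of_eq_mul_aeval {ξ : σ → K} {η : τ → K} (hξ : Generates k ξ) {c : K}
    {P : σ → MvPolynomial τ k} {e : ℕ} (hP : ∀ i, (P i).IsHomogeneous e)
    (h : ∀ i, ξ i = c * aeval η (P i)) : Generates k η := fun z => by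
  obtain ⟨d, a, b, ha, hb, hb0, hz⟩ := hξ z
  rw [aeval_eq_pow_mul_aeval hb h, ← comp_aeval_apply] at hb0 hz
  rw [aeval_eq_pow_mul_aeval ha h, ← comp_aeval_apply, mul_left_comm] at hz
  exact ⟨_, _, _, ha.aeval P hP, hb.aeval P hP, right_ne_zero_of_mul hb0,
    mul_left_cancel₀ (left_ne_zero_of_mul hb0) hz⟩

theorem Generates.of_comp {ξ : τ → K} {e : σ → τ} (h : Generates k (ξ ∘ e)) : Generates k ξ :=
  h.of_eq_mul_aeval (c := 1) (P := fun i => X (e i)) (fun _ => isHomogeneous_X k _) (by simp)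

theorem Generates.smul {ξ : σ → K} (h : Generates k ξ) {c : K} (hc : c ≠ 0) :
    Generates k (c • ξ) :=
  h.of_eq_mul_aeval (c := c⁻¹) (P := X) (fun _ => isHomogeneous_X k _) (by simp [hc])

end Generates

namespace CremonaMap

section Shear

variable {k ι : Type*} [Field k] [DecidableEq ι] {i : ι} {A B : MvPolynomial {j // j ≠ i} k}
  {d : ℕ}

/-- The components of the map changing only the `i`-th homogeneous coordinate, by adding the
rational function `A / B` of the others. -/
noncomputable def shearFun (A B : MvPolynomial {j // j ≠ i} k) : ι → MvPolynomial ι k :=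
  Function.update (fun j => rename Subtype.val B * X j) i
    (rename Subtype.val B * X i + rename Subtype.val A)

theorem shearFun_self :
    shearFun A B i = rename Subtype.val B * X i + rename Subtype.val A :=
  Function.update_self _ _ _

theorem shearFun_of_ne {j : ι} (hj : j ≠ i) : shearFun A B j = rename Subtype.val B * X j :=
  Function.update_of_ne hj _ _

theorem isHomogeneous_shearFun (hA : A.IsHomogeneous (d + 1)) (hB : B.IsHomogeneous d) (j : ι) :
    (shearFun A B j).IsHomogeneous (d + 1) := by
  have hBX : (rename Subtype.val B * X j).IsHomogeneous (d + 1) :=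
    hB.rename_isHomogeneous.mul (isHomogeneous_X k j)
  obtain rfl | hj := eq_or_ne j i
  · rw [shearFun_self]
    exact hBX.add hA.rename_isHomogeneous
  · rwa [shearFun_of_ne hj]

theorem aeval_shearFun_rename {e : ℕ} {p : MvPolynomial {j // j ≠ i} k} (hp : p.IsHomogeneous e) :
    aeval (shearFun A B) (rename Subtype.val p) =
      rename Subtype.val B ^ e * rename Subtype.val p := by
  have hX : rename Subtype.val p = aeval (X ∘ Subtype.val : _ → MvPolynomial ι k) p :=
    DFunLike.congr_fun (rename_eq_aeval _) p
  rw [aeval_rename, hX]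
  exact aeval_eq_pow_mul_aeval hp fun j => shearFun_of_ne j.2

theorem aeval_shearFun_shearFun_neg (hA : A.IsHomogeneous (d + 1)) (hB : B.IsHomogeneous d)
    (j : ι) :
    aeval (shearFun A B) (shearFun (-A) B j) = rename Subtype.val B ^ (d + 2) * X j := by
  obtain rfl | hj := eq_or_ne j i
  · rw [shearFun_self, map_add, map_mul, aeval_X, shearFun_self, aeval_shearFun_rename hB,
      aeval_shearFun_rename hA.neg, map_neg]
    ring
  · rw [shearFun_of_ne hj, map_mul, aeval_X, shearFun_of_ne hj, aeval_shearFun_rename hB]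
    ring

/-- The elementary Cremona transformation adding to the `i`-th homogeneous coordinate the rational
function `A / B` of the others. -/
@[simps]
noncomputable def shear (hA : A.IsHomogeneous (d + 1)) (hB : B.IsHomogeneous d) (hB0 : B ≠ 0) :
    CremonaMap k ι where
  toFun := shearFun A B
  invFun := shearFun (-A) B
  deg := d + 1
  invDeg := d + 1
  factor := rename Subtype.val B ^ (d + 2)
  invFactor := rename Subtype.val B ^ (d + 2)
  isHomogeneous_toFun := isHomogeneous_shearFun hA hB
  isHomogeneous_invFun := isHomogeneous_shearFun hA.neg hB
  factor_ne_zero := pow_ne_zero _ ((rename_injective _ Subtype.val_injective).ne hB0)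
  invFactor_ne_zero := pow_ne_zero _ ((rename_injective _ Subtype.val_injective).ne hB0)
  aeval_toFun_invFun := aeval_shearFun_shearFun_neg hA hB
  aeval_invFun_toFun := by
    simpa only [neg_neg] using aeval_shearFun_shearFun_neg hA.neg hB

end Shear

end CremonaMap

namespace PointEquiv

variable {k ι K : Type*} [Field k] [Field K] [Algebra k K]

theorem update_of_generates [DecidableEq ι] {ξ : ι → K} {i i₀ : ι} (hi₀ : i₀ ≠ i)
    (hξ : ξ i₀ ≠ 0) (hgen : Generates k fun j : {j // j ≠ i} => ξ j) (z : K) :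
    PointEquiv k ξ (Function.update ξ i z) := by
  obtain ⟨d, a, b, ha, hb, hb0, hab⟩ := hgen ((z - ξ i) / ξ i₀)
  have hsum : aeval (fun j : {j // j ≠ i} => ξ j) (a * X ⟨i₀, hi₀⟩) =
      aeval (fun j : {j // j ≠ i} => ξ j) b * (z - ξ i) := by
    rw [map_mul, aeval_X, ← hab]
    field_simp
  have hξ' : (Function.update ξ i z ∘ Subtype.val : {j // j ≠ i} → K) =
      fun j : {j // j ≠ i} => ξ j :=
    funext fun j => Function.update_of_ne j.2 _ _
  refine ⟨.shear (ha.mul (isHomogeneous_X k ⟨i₀, hi₀⟩)) hb (by rintro rfl; simp at hb0),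
    ⟨_, hb0, fun j => ?_⟩, ⟨_, hb0, fun j => ?_⟩⟩
  · obtain rfl | hj := eq_or_ne j i
    · rw [CremonaMap.shear_toFun, CremonaMap.shearFun_self, map_add, map_mul, aeval_rename,
        aeval_rename, aeval_X, Function.update_self, Function.comp_def, hsum]
      ring
    · rw [CremonaMap.shear_toFun, CremonaMap.shearFun_of_ne hj, map_mul, aeval_rename, aeval_X,
        Function.update_of_ne hj, Function.comp_def]
  · obtain rfl | hj := eq_or_ne j i
    · rw [CremonaMap.symm_toFun, CremonaMap.shear_invFun, CremonaMap.shearFun_self, map_neg,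
        map_add, map_neg, map_mul, aeval_rename, aeval_rename, aeval_X, hξ', Function.update_self,
        hsum]
      ring
    · rw [CremonaMap.symm_toFun, CremonaMap.shear_invFun, CremonaMap.shearFun_of_ne hj, map_mul,
        aeval_rename, aeval_X, hξ', Function.update_of_ne hj]

theorem of_eqOn_of_generates [Finite ι] {ξ η : ι → K} {s : Set ι} {i₀ : ι} (hi₀ : i₀ ∈ s)
    (hξ : ξ i₀ ≠ 0) (hgen : Generates k (s.domRestrict ξ)) (h : s.EqOn ξ η) : PointEquiv k ξ η := by
  classical
  have := Fintype.ofFinite ι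
  suffices H : ∀ t : Finset ι, PointEquiv k ξ (t.piecewise η ξ) by
    simpa only [Finset.piecewise_univ] using H Finset.univ
  intro t
  induction t using Finset.induction_on with
  | empty => simpa only [Finset.piecewise_empty] using PointEquiv.refl ξ
  | insert i t _ ih =>
    have heq : s.EqOn (t.piecewise η ξ) ξ := fun j hj => by
      by_cases hjt : j ∈ t
      · rw [Finset.piecewise_eq_of_mem _ _ _ hjt, h hj]
      · rw [Finset.piecewise_eq_of_notMem _ _ _ hjt]
    rw [Finset.piecewise_insert]
    by_cases hi : i ∈ s
    · rwa [Function.update_eq_self_iff.2 ((h hi).symm.trans (heq hi).symm)]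
    · have hne (j : s) : (j : ι) ≠ i := ne_of_mem_of_not_mem j.2 hi
      have hcomp : (fun j : {j // j ≠ i} => t.piecewise η ξ j) ∘ (fun j : s => ⟨j, hne j⟩) =
          s.domRestrict ξ := funext fun j => heq j.2
      exact ih.trans (update_of_generates (ne_of_mem_of_not_mem hi₀ hi)
        ((heq hi₀).trans_ne hξ) (Generates.of_comp (hcomp ▸ hgen)) _)

theorem of_subset_range [Finite ι] {ξ η : ι → K} {S : Set K} (h1 : 1 ∈ S)
    (hS : IntermediateField.adjoin k S = ⊤) (hξ : S ⊆ Set.range ξ) (hη : S ⊆ Set.range η) :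
    PointEquiv k ξ η := by
  choose e he using fun s : S => hξ s.2
  choose e' he' using fun s : S => hη s.2
  have injective_of_section {ζ : ι → K} {g : S → ι} (hg : ∀ s, ζ (g s) = s) : g.Injective :=
    fun a b hab => Subtype.ext (by rw [← hg, hab, hg])
  have := Finite.of_injective e (injective_of_section he)
  obtain ⟨σ, hσ⟩ := Equiv.Perm.exists_extending_pair e e' (injective_of_section he)
    (injective_of_section he')
  have hrange : Set.range ((Set.range e).domRestrict ξ) = S := by
    rw [Set.range_domRestrict, ← Set.range_comp, show ξ ∘ e = Subtype.val from funext he,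
      Subtype.range_coe]
  have heqOn : (Set.range e).EqOn ξ (η ∘ σ) := by
    rintro _ ⟨s, rfl⟩
    rw [he, Function.comp_apply, hσ, he']
  exact (of_eqOn_of_generates (Set.mem_range_self (⟨1, h1⟩ : S))
    ((he ⟨1, h1⟩).trans_ne one_ne_zero)
    (.of_adjoin_eq_top (by rwa [hrange]) (by rwa [hrange])) heqOn).trans (comp_perm η σ).symm

end PointEquiv

section Dehomogenize

variable {k ι A : Type*} [Field k] [CommRing A] [Algebra k A] {i : ι} {d : ℕ}
  {f : MvPolynomial ι k}

open scoped Classical in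
/-- Substitution of `1` for the `i`-th variable. -/
noncomputable def dehomogenize (i : ι) : MvPolynomial ι k →ₐ[k] MvPolynomial {j // j ≠ i} k :=
  aeval fun j => if h : j = i then 1 else X ⟨j, h⟩

theorem aeval_dehomogenize {y : ι → A} (hy : y i = 1) (f : MvPolynomial ι k) :
    aeval (fun j : {j // j ≠ i} => y j) (dehomogenize i f) = aeval y f := by
  rw [dehomogenize, comp_aeval_apply]
  congr 2 with j
  split_ifs with h
  · rw [map_one, h, hy]
  · rw [aeval_X]

theorem dehomogenize_ne_zero [Infinite k] (hf : f.IsHomogeneous d) (hf0 : f ≠ 0) :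
    dehomogenize i f ≠ 0 := fun h0 => by
  refine mul_ne_zero hf0 (X_ne_zero i) (MvPolynomial.funext fun z => ?_)
  obtain hz | hz := eq_or_ne (z i) 0
  · simp [hz]
  have hscale : ∀ j, z j = z i * ((z i)⁻¹ * z j) := fun j => (mul_inv_cancel_left₀ hz _).symm
  rw [map_mul, ← coe_aeval_eq_eval, RingHom.coe_coe, aeval_eq_pow_mul_aeval hf hscale,
    ← aeval_dehomogenize (y := fun j => (z i)⁻¹ * z j) (inv_mul_cancel₀ hz), h0]
  simp only [map_zero, mul_zero, zero_mul]

theorem not_algebraicIndependent_of_aeval_eq_zero [Infinite k] {x : ι → A} (hi : x i = 1)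
    (hf : f.IsHomogeneous d) (hf0 : f ≠ 0) (hfx : aeval x f = 0) :
    ¬ AlgebraicIndependent k fun j : {j // j ≠ i} => x j := fun hind =>
  dehomogenize_ne_zero hf hf0
    (hind.eq_zero_of_aeval_eq_zero _ (by rw [aeval_dehomogenize hi, hfx]))

end Dehomogenize

section FunctionField

open Cardinal IntermediateField

variable {k K : Type*} [Field k] [Field K] [Algebra k K]

theorem exists_adjoin_insert_eq_top [Infinite k] {ι : Type*} [Finite ι] (B : ι → Set K)
    (hB : ∀ i, Finite (IntermediateField (adjoin k (B i)) K)) :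
    ∃ p, ∀ i, adjoin k (insert p (B i)) = ⊤ := by
  let U : (Σ i, {N : IntermediateField (adjoin k (B i)) K // N ≠ ⊤}) → Subspace k K := fun N =>
    Subalgebra.toSubmodule (N.2.1.restrictScalars k).toSubalgebra
  have hU : ⋃ N, (U N : Set K) ≠ Set.univ := fun h => by
    obtain ⟨⟨i, N, hN⟩, htop⟩ := Subspace.exists_eq_top_of_iUnion_eq_univ h
    exact hN (top_unique fun z _ => (htop ▸ Submodule.mem_top : z ∈ U ⟨i, N, hN⟩))
  obtain ⟨p, hp⟩ := (Set.ne_univ_iff_exists_notMem _).1 hU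
  refine ⟨p, fun i => ?_⟩
  have htop : adjoin (adjoin k (B i)) {p} = ⊤ := by
    by_contra hne
    exact hp (Set.mem_iUnion.2 ⟨⟨i, _, hne⟩, mem_adjoin_simple_self _ p⟩)
  rw [← Set.union_singleton, ← adjoin_adjoin_left, htop, restrictScalars_top]

theorem finite_intermediateField_adjoin [CharZero k] [Algebra.EssFiniteType k K] {B : Set K}
    (hB : (AlgebraicIndependent.matroid k K).IsBase B) :
    Finite (IntermediateField (adjoin k B) K) := by
  have : Algebra.IsAlgebraic (adjoin k B) K :=
    Subtype.range_coe (s := B) ▸ (AlgebraicIndependent.matroid_isBase_iff.1 hB).isAlgebraic_field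
  have : Algebra.EssFiniteType (adjoin k B) K := Algebra.EssFiniteType.of_comp k _ _
  have : Module.Finite (adjoin k B) K := Algebra.finite_of_essFiniteType_of_isAlgebraic
  exact Field.finite_intermediateField_of_exists_primitive_element _ _
    (Field.exists_primitive_element _ _)

theorem exists_common_primitive [CharZero k] [Algebra.EssFiniteType k K] {B B' : Set K}
    (hB : (AlgebraicIndependent.matroid k K).IsBase B)
    (hB' : (AlgebraicIndependent.matroid k K).IsBase B') :
    ∃ p, adjoin k (insert p B) = ⊤ ∧ adjoin k (insert p B') = ⊤ := by
  obtain ⟨p, hp⟩ := exists_adjoin_insert_eq_top (Bool.rec B B')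
    (Bool.rec (finite_intermediateField_adjoin hB) (finite_intermediateField_adjoin hB'))
  exact ⟨p, hp false, hp true⟩

theorem isAlgebraic_algebraAdjoin {S : Set K} (hS : adjoin k S = ⊤) :
    Algebra.IsAlgebraic (Algebra.adjoin k S) K where
  isAlgebraic z := by
    have hz : z ∈ adjoin k S := hS ▸ mem_top
    induction hz using adjoin_induction with
    | mem z hz => exact isAlgebraic_algebraMap (⟨z, Algebra.subset_adjoin hz⟩ : Algebra.adjoin k S)
    | algebraMap c => exact isAlgebraic_algebraMap (algebraMap k (Algebra.adjoin k S) c)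
    | add _ _ _ _ h h' => exact h.add h'
    | mul _ _ _ _ h h' => exact h.mul h'
    | inv _ _ h => exact h.inv

theorem adjoin_range_compl_eq_top {ι : Type*} {x : ι → K} {i : ι} (hi : x i = 1)
    (hx : adjoin k (Set.range x) = ⊤) :
    adjoin k (Set.range fun j : {j // j ≠ i} => x j) = ⊤ := by
  rw [eq_top_iff, ← hx, adjoin_le_iff]
  rintro _ ⟨j, rfl⟩
  obtain rfl | hj := eq_or_ne j i
  · exact hi ▸ one_mem _
  · exact subset_adjoin _ _ ⟨⟨j, hj⟩, rfl⟩

theorem trdeg_add_two_le [Infinite k] {n d : ℕ} {x : Fin n → K} {i : Fin n} (hi : x i = 1)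
    (hx : adjoin k (Set.range x) = ⊤) {f : MvPolynomial (Fin n) k} (hf : f.IsHomogeneous d)
    (hf0 : f ≠ 0) (hfx : aeval x f = 0) : Algebra.trdeg k K + 2 ≤ n := by
  have := isAlgebraic_algebraAdjoin (adjoin_range_compl_eq_top hi hx)
  have hcard : Fintype.card {j // j ≠ i} + 1 = n := by
    simp only [Fintype.card_subtype_compl, Fintype.card_fin, Fintype.card_unique]
    exact Nat.sub_add_cancel i.pos
  obtain hlt | hle := lt_or_ge (Algebra.trdeg k K) (Fintype.card {j // j ≠ i})
  · obtain ⟨t, ht⟩ := lt_aleph0.1 (hlt.trans natCast_lt_aleph0)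
    rw [ht, Nat.cast_lt] at hlt
    rw [ht, ← hcard]
    exact_mod_cast Nat.succ_le_succ hlt
  · refine absurd ?_ (not_algebraicIndependent_of_aeval_eq_zero hi hf hf0 hfx)
    refine (Algebra.IsAlgebraic.isTranscendenceBasis_of_lift_le_trdeg_of_finite k _ ?_).1
    simpa only [lift_uzero, mk_fintype, lift_natCast] using hle

theorem exists_subset_range {ι α : Type*} [Finite ι] [Nonempty α] {S : Set α} (hS : S.Finite)
    (hcard : S.ncard ≤ Nat.card ι) : ∃ ζ : ι → α, S ⊆ Set.range ζ := by
  have := hS.to_subtype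
  have := Fintype.ofFinite S
  have := Fintype.ofFinite ι
  rw [← Nat.card_coe_set_eq, Nat.card_eq_fintype_card, Nat.card_eq_fintype_card] at hcard
  obtain ⟨e⟩ := Function.Embedding.nonempty_of_card_le hcard
  obtain ⟨a⟩ := ‹Nonempty α›
  exact ⟨Function.extend e Subtype.val fun _ => a,
    fun s hs => ⟨e ⟨s, hs⟩, e.injective.extend_apply _ _ _⟩⟩

theorem exists_insert_insert_insert_subset_range {ι : Type*} [Finite ι] {B : Set K}
    (hB : B.Finite) (hcard : B.ncard + 3 ≤ Nat.card ι) (a b c : K) :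
    ∃ ζ : ι → K, insert a (insert b (insert c B)) ⊆ Set.range ζ := by
  refine exists_subset_range (((hB.insert c).insert b).insert a) (le_trans ?_ hcard)
  have h₁ := Set.ncard_insert_le c B
  have h₂ := Set.ncard_insert_le b (insert c B)
  have h₃ := Set.ncard_insert_le a (insert b (insert c B))
  omega

theorem adjoin_insert_eq_top {S : Set K} (hS : adjoin k S = ⊤) (a : K) :
    adjoin k (insert a S) = ⊤ :=
  top_unique (hS.ge.trans (adjoin.mono _ _ _ (Set.subset_insert _ _)))

namespace PointEquiv

variable {ι : Type*} [Finite ι] {ξ η : ι → K} {B B' : Set K} {p p' : K}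

theorem of_insert_subset_range (hB : B.Finite) (hcard : B.ncard + 3 ≤ Nat.card ι)
    (hp : adjoin k (insert p B) = ⊤) (hp' : adjoin k (insert p' B) = ⊤)
    (hξ : insert 1 (insert p B) ⊆ Set.range ξ) (hη : insert 1 (insert p' B) ⊆ Set.range η) :
    PointEquiv k ξ η := by
  obtain ⟨ζ, hζ⟩ := exists_insert_insert_insert_subset_range hB hcard 1 p p'
  have hpζ : insert 1 (insert p B) ⊆ Set.range ζ := by grind
  have hp'ζ : insert 1 (insert p' B) ⊆ Set.range ζ := by grind
  exact (of_subset_range (Set.mem_insert _ _) (adjoin_insert_eq_top hp 1) hξ hpζ).trans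
    (of_subset_range (Set.mem_insert _ _) (adjoin_insert_eq_top hp' 1) hp'ζ hη)

theorem of_isBase [CharZero k] [Algebra.EssFiniteType k K] (hBfin : B.Finite)
    (hB : (AlgebraicIndependent.matroid k K).IsBase B)
    (hB' : (AlgebraicIndependent.matroid k K).IsBase B') (hcard : B.ncard + 3 ≤ Nat.card ι)
    (hp : adjoin k (insert p B) = ⊤) (hp' : adjoin k (insert p' B') = ⊤)
    (hξ : insert 1 (insert p B) ⊆ Set.range ξ) (hη : insert 1 (insert p' B') ⊆ Set.range η) :
    PointEquiv k ξ η := by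
  induction hm : (B \ B').ncard using Nat.strong_induction_on generalizing B p ξ with
  | _ m ih =>
  obtain hsub | ⟨e, heB, heB'⟩ := (B \ B').eq_empty_or_nonempty
  · obtain rfl := hB.eq_of_subset_isBase hB' (Set.sdiff_eq_empty.1 hsub)
    exact of_insert_subset_range hBfin hcard hp hp' hξ hη
  obtain ⟨f, ⟨hfB', -⟩, hB₁⟩ := hB.exchange_mem hB' heB heB'
  obtain ⟨t, htB, htB₁⟩ := exists_common_primitive hB hB₁
  obtain ⟨ζ, hζ⟩ := exists_insert_insert_insert_subset_range hBfin hcard 1 t f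
  have hBζ : insert 1 (insert t B) ⊆ Set.range ζ :=
    (Set.insert_subset_insert (Set.insert_subset_insert (Set.subset_insert _ _))).trans hζ
  have hB₁ζ : insert 1 (insert t (insert f (B \ {e}))) ⊆ Set.range ζ :=
    (Set.insert_subset_insert
      (Set.insert_subset_insert (Set.insert_subset_insert Set.sdiff_subset))).trans hζ
  have hlt : (insert f (B \ {e}) \ B').ncard < m := by
    rw [Set.insert_sdiff_of_mem _ hfB', sdiff_right_comm, ← hm]
    exact Set.ncard_sdiff_singleton_lt_of_mem ⟨heB, heB'⟩ (hBfin.subset Set.sdiff_subset)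
  exact (of_insert_subset_range hBfin hcard hp htB hξ hBζ).trans
    (ih _ hlt (hB.finite_of_finite hBfin hB₁) hB₁
      (hB₁.ncard_eq_ncard_of_isBase hB ▸ hcard) htB₁ hB₁ζ rfl)

/-- As `x` generates on its own, the spare coordinate `0` may be replaced by a primitive element. -/
theorem exists_isBase_of_adjoin_eq_top [CharZero k] [Algebra.EssFiniteType k K] {n : ℕ}
    {x : Fin n → K} (h1 : 1 ∈ Set.range x) (hx : adjoin k (Set.range x) = ⊤) :
    ∃ (B : Set K) (p : K) (ξ : Fin (n + 1) → K), B.Finite ∧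
      (AlgebraicIndependent.matroid k K).IsBase B ∧ adjoin k (insert p B) = ⊤ ∧
      insert 1 (insert p B) ⊆ Set.range ξ ∧
      PointEquiv k (Fin.cons 0 x : Fin (n + 1) → K) ξ := by
  have := isAlgebraic_algebraAdjoin hx
  obtain ⟨B, hBx, hB⟩ := exists_isTranscendenceBasis_subset (R := k) (Set.range x)
  obtain ⟨p, hp, -⟩ := exists_common_primitive hB hB
  have hrange (z : K) : Set.range x ⊆ Set.range (Fin.cons z x : Fin (n + 1) → K) :=
    Fin.range_cons z x ▸ Set.subset_insert _ _
  refine ⟨B, p, Fin.cons p x, (Set.finite_range x).subset hBx, hB, hp, ?_,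
    of_subset_range h1 hx (hrange 0) (hrange p)⟩
  rw [Fin.range_cons]
  grind

theorem cons_zero_of_adjoin_eq_top [CharZero k] {n : ℕ} {x y : Fin n → K}
    (hn : Algebra.trdeg k K + 2 ≤ n) (hx1 : 1 ∈ Set.range x) (hx : adjoin k (Set.range x) = ⊤)
    (hy1 : 1 ∈ Set.range y) (hy : adjoin k (Set.range y) = ⊤) :
    PointEquiv k (Fin.cons 0 x : Fin (n + 1) → K) (Fin.cons 0 y : Fin (n + 1) → K) := by
  have : Algebra.EssFiniteType k K := by
    rw [← fg_top_iff, ← hx]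
    exact fg_adjoin_of_finite (Set.finite_range x)
  obtain ⟨B, p, ξ, hBfin, hB, hp, hξ, hxξ⟩ := exists_isBase_of_adjoin_eq_top hx1 hx
  obtain ⟨B', p', η, -, hB', hp', hη, hyη⟩ := exists_isBase_of_adjoin_eq_top hy1 hy
  have hcard : B.ncard + 2 ≤ n := by
    rw [← (AlgebraicIndependent.matroid_isBase_iff.1 hB).cardinalMk_eq_trdeg,
      ← Set.cast_ncard hBfin] at hn
    exact_mod_cast hn
  refine (hxξ.trans (of_isBase hBfin hB hB' ?_ hp hp' hξ hη)).trans hyη.symm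
  rw [Nat.card_eq_fintype_card, Fintype.card_fin]
  omega

theorem cons_zero_of_generates [CharZero k] {n : ℕ} {x y : Fin n → K}
    (hn : Algebra.trdeg k K + 2 ≤ n) (hx1 : 1 ∈ Set.range x) (hx : adjoin k (Set.range x) = ⊤)
    (hy0 : y ≠ 0) (hy : Generates k y) :
    PointEquiv k (Fin.cons 0 x : Fin (n + 1) → K) (Fin.cons 0 y : Fin (n + 1) → K) := by
  obtain ⟨i, hi⟩ := Function.ne_iff.1 hy0
  have hinv := inv_ne_zero hi
  have hcons : (Fin.cons 0 ((y i)⁻¹ • y) : Fin (n + 1) → K) = (y i)⁻¹ • Fin.cons 0 y := by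
    ext j
    cases j using Fin.cases <;> simp
  have hnorm := cons_zero_of_adjoin_eq_top hn hx1 hx ⟨i, inv_mul_cancel₀ hi⟩
    (hy.smul hinv).adjoin_eq_top
  rw [hcons] at hnorm
  simpa only [smul_inv_smul₀ hi] using hnorm.smul_right hi

end PointEquiv

end FunctionField

section Cone

variable {k A : Type*} [Field k] [CommRing A] [Algebra k A] {n d e m : ℕ}
  {f L p : MvPolynomial (Fin n) k} {h : MvPolynomial (Fin (n + 1)) k}

/-- The equation of the cone with vertex `(1 : 0 : ⋯ : 0)` over a subvariety of the hyperplane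
`X 0 = 0`. -/
noncomputable def cone : MvPolynomial (Fin n) k →ₐ[k] MvPolynomial (Fin (n + 1)) k :=
  rename Fin.succ

/-- Restriction of a form to the hyperplane `X 0 = 0`. -/
noncomputable def restrict : MvPolynomial (Fin (n + 1)) k →ₐ[k] MvPolynomial (Fin n) k :=
  aeval (Fin.cons 0 X : Fin (n + 1) → MvPolynomial (Fin n) k)

@[simp]
theorem restrict_X_zero : restrict (X 0 : MvPolynomial (Fin (n + 1)) k) = 0 := by
  rw [restrict, aeval_X, Fin.cons_zero]

@[simp]
theorem restrict_cone (p : MvPolynomial (Fin n) k) : restrict (cone p) = p := by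
  rw [restrict, cone, aeval_rename, Fin.cons_comp_succ, aeval_X_left_apply]

theorem isHomogeneous_cone (hp : p.IsHomogeneous d) : (cone p).IsHomogeneous d :=
  hp.rename_isHomogeneous

theorem isHomogeneous_restrict (hh : h.IsHomogeneous d) : (restrict h).IsHomogeneous d := by
  rw [← one_mul d]
  refine hh.aeval _ (Fin.cases ?_ fun j => ?_)
  · exact isHomogeneous_zero _ _ _
  · exact isHomogeneous_X _ _

theorem aeval_cons_zero (x : Fin n → A) (h : MvPolynomial (Fin (n + 1)) k) :
    aeval (Fin.cons 0 x : Fin (n + 1) → A) h = aeval x (restrict h) := by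
  rw [restrict, comp_aeval_apply]
  congr 2 with j
  cases j using Fin.cases <;> simp

theorem cone_ne_zero (hp : p ≠ 0) : cone p ≠ 0 := fun h =>
  hp (by rw [← restrict_cone p, h, map_zero])

theorem cone_dvd_cone : cone f ∣ cone p ↔ f ∣ p :=
  ⟨fun h => by simpa only [restrict_cone] using map_dvd restrict h, map_dvd cone⟩

theorem finSuccEquiv_cone (p : MvPolynomial (Fin n) k) :
    finSuccEquiv k n (cone p) = Polynomial.C p := by
  induction p using MvPolynomial.induction_on with
  | C a => rw [cone, rename_C, finSuccEquiv_apply, eval₂Hom_C, RingHom.comp_apply]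
  | add p q hp hq => rw [map_add, map_add, hp, hq, map_add]
  | mul_X p j hp => rw [map_mul, map_mul, hp, cone, rename_X, finSuccEquiv_X_succ, map_mul]

theorem prime_cone : Prime (cone p) ↔ Prime p := by
  rw [← MulEquiv.prime_iff (finSuccEquiv k n), finSuccEquiv_cone, Polynomial.prime_C_iff]

theorem X_zero_dvd_sub_cone_restrict (h : MvPolynomial (Fin (n + 1)) k) :
    X 0 ∣ h - cone (restrict h) := by
  let π := Ideal.Quotient.mkₐ k (Ideal.span {(X 0 : MvPolynomial (Fin (n + 1)) k)})
  have hπ : π = (π.comp cone).comp restrict := by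
    ext i
    cases i using Fin.cases <;> simp [π, restrict, cone]
  rw [← Ideal.mem_span_singleton, ← Ideal.Quotient.eq]
  exact DFunLike.congr_fun hπ h

theorem exists_eq_cone_restrict_add (hh : h.IsHomogeneous d) :
    ∃ b, b.IsHomogeneous (d - 1) ∧ h = cone (restrict h) + X 0 * b := by
  obtain ⟨b, hb⟩ := X_zero_dvd_sub_cone_restrict h
  have hXb := hh.sub (isHomogeneous_cone (isHomogeneous_restrict hh))
  rw [hb] at hXb
  exact ⟨b, isHomogeneous_right_of_mul (isHomogeneous_X k 0) (X_ne_zero 0) hXb,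
    sub_eq_iff_eq_add'.1 hb⟩

/-- The ideal of the hyperplane section `X 0 = 0` of the cone over `f`. -/
noncomputable def sectionIdeal (f : MvPolynomial (Fin n) k) :
    Ideal (MvPolynomial (Fin (n + 1)) k) :=
  Ideal.span {X 0, cone f}

theorem X_zero_mem_sectionIdeal : X 0 ∈ sectionIdeal f :=
  Ideal.mem_span_pair.2 ⟨1, 0, by ring⟩

theorem cone_mem_sectionIdeal : cone f ∈ sectionIdeal f :=
  Ideal.mem_span_pair.2 ⟨0, 1, by ring⟩

theorem mem_sectionIdeal_iff : h ∈ sectionIdeal f ↔ f ∣ restrict h := by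
  constructor
  · intro hmem
    obtain ⟨a, b, rfl⟩ := Ideal.mem_span_pair.1 hmem
    simp
  · intro hdvd
    obtain ⟨b, hb⟩ := X_zero_dvd_sub_cone_restrict h
    rw [sub_eq_iff_eq_add.1 hb]
    exact add_mem (Ideal.mul_mem_right _ _ X_zero_mem_sectionIdeal)
      (Ideal.mem_of_dvd _ (cone_dvd_cone.2 hdvd) cone_mem_sectionIdeal)

theorem map_mem_pow_of_mem_sectionIdeal_pow {R : Type*} [CommRing R] {I : Ideal R}
    (φ : MvPolynomial (Fin (n + 1)) k →+* R) (hX : φ (X 0) ∈ I) (hf : φ (cone f) ∈ I)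
    (hh : h ∈ sectionIdeal f ^ m) : φ h ∈ I ^ m := by
  have hmap : (sectionIdeal f).map φ ≤ I := by
    rw [sectionIdeal, Ideal.map_span, Ideal.span_le, Set.image_pair]
    exact Set.pair_subset hX hf
  exact Ideal.pow_right_mono hmap m (Ideal.map_pow φ _ m ▸ Ideal.mem_map_of_mem φ hh)

/-- The components of the rational map which contracts the cone over `f` onto its section. -/
noncomputable def coneContractionFun (f L : MvPolynomial (Fin n) k) :
    Fin (n + 1) → MvPolynomial (Fin (n + 1)) k :=
  Fin.cons (cone f * X 0) fun j => cone L * X j.succ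

@[simp]
theorem coneContractionFun_zero : coneContractionFun f L 0 = cone f * X 0 := rfl

@[simp]
theorem coneContractionFun_succ (j : Fin n) : coneContractionFun f L j.succ = cone L * X j.succ :=
  rfl

theorem aeval_coneContractionFun_cone (hp : p.IsHomogeneous e) :
    aeval (coneContractionFun f L) (cone p) = cone L ^ e * cone p := by
  have hscale (j : Fin n) :
      (coneContractionFun f L ∘ Fin.succ) j = cone L * (X ∘ Fin.succ) j := rfl
  rw [cone, aeval_rename, aeval_eq_pow_mul_aeval hp hscale, ← aeval_rename,
    aeval_X_left_apply, cone]

theorem isHomogeneous_coneContractionFun (hf : f.IsHomogeneous d) (hL : L.IsHomogeneous d)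
    (j : Fin (n + 1)) : (coneContractionFun f L j).IsHomogeneous (d + 1) := by
  cases j using Fin.cases with
  | zero => exact (isHomogeneous_cone hf).mul (isHomogeneous_X k _)
  | succ j => exact (isHomogeneous_cone hL).mul (isHomogeneous_X k _)

theorem aeval_coneContractionFun_coneContractionFun (hf : f.IsHomogeneous d)
    (hL : L.IsHomogeneous d) (j : Fin (n + 1)) :
    aeval (coneContractionFun f L) (coneContractionFun L f j) = cone (f * L ^ (d + 1)) * X j := by
  cases j using Fin.cases with
  | zero =>
    rw [coneContractionFun_zero, map_mul, aeval_coneContractionFun_cone hL, aeval_X,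
      coneContractionFun_zero, map_mul, map_pow]
    ring
  | succ j =>
    rw [coneContractionFun_succ, map_mul, aeval_coneContractionFun_cone hf, aeval_X,
      coneContractionFun_succ, map_mul, map_pow]
    ring

/-- The Cremona transformation `(X₀ : X') ↦ (f X₀ : L X')` for two forms `f` and `L` of the same
degree. It contracts the cone over `f` onto the section of this cone by `X₀ = 0`. -/
@[simps]
noncomputable def coneContraction (hf : f.IsHomogeneous d) (hL : L.IsHomogeneous d) (hf0 : f ≠ 0)
    (hL0 : L ≠ 0) : CremonaMap k (Fin (n + 1)) where
  toFun := coneContractionFun f L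
  invFun := coneContractionFun L f
  deg := d + 1
  invDeg := d + 1
  factor := cone (f * L ^ (d + 1))
  invFactor := cone (L * f ^ (d + 1))
  isHomogeneous_toFun := isHomogeneous_coneContractionFun hf hL
  isHomogeneous_invFun := isHomogeneous_coneContractionFun hL hf
  factor_ne_zero := cone_ne_zero (mul_ne_zero hf0 (pow_ne_zero _ hL0))
  invFactor_ne_zero := cone_ne_zero (mul_ne_zero hL0 (pow_ne_zero _ hf0))
  aeval_toFun_invFun := aeval_coneContractionFun_coneContractionFun hf hL
  aeval_invFun_toFun := aeval_coneContractionFun_coneContractionFun hL hf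

theorem restrict_aeval_coneContractionFun (hh : h.IsHomogeneous e) :
    restrict (aeval (coneContractionFun f L) h) = L ^ e * restrict h := by
  rw [comp_aeval_apply]
  refine aeval_eq_pow_mul_aeval hh fun j => ?_
  cases j using Fin.cases with
  | zero =>
    rw [coneContractionFun_zero, map_mul, restrict_X_zero, mul_zero, Fin.cons_zero, mul_zero]
  | succ j =>
    rw [coneContractionFun_succ, map_mul, restrict_cone, restrict, aeval_X, Fin.cons_succ]

theorem cone_pow_dvd_of_mem_sectionIdeal_pow (hf : f.IsHomogeneous d)
    (hh : h ∈ sectionIdeal f ^ m) : cone f ^ m ∣ aeval (coneContractionFun f L) h := by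
  have hmem : aeval (coneContractionFun f L) h ∈ Ideal.span {cone f} ^ m := by
    refine map_mem_pow_of_mem_sectionIdeal_pow (aeval (coneContractionFun f L)).toRingHom ?_ ?_ hh
    · refine Ideal.mem_span_singleton.2 ?_
      rw [AlgHom.toRingHom_eq_coe, RingHom.coe_coe, aeval_X]
      exact dvd_mul_right _ _
    · refine Ideal.mem_span_singleton.2 ?_
      rw [AlgHom.toRingHom_eq_coe, RingHom.coe_coe, aeval_coneContractionFun_cone hf]
      exact dvd_mul_left _ _
  rwa [Ideal.span_singleton_pow, Ideal.mem_span_singleton] at hmem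

theorem not_cone_dvd_X_zero (hf : Prime f) : ¬ cone f ∣ X 0 := fun hdvd => by
  have hX : X 0 ∣ cone f := (prime_cone.2 hf).irreducible.dvd_symm (X_prime).irreducible hdvd
  have hzero := map_dvd restrict hX
  rw [restrict_X_zero, restrict_cone, zero_dvd_iff] at hzero
  exact hf.ne_zero hzero

/-- The order of vanishing of `h` at the generic point of the section of the cone is the order of
vanishing of its pullback along the cone, the exceptional divisor of the contraction. -/
theorem cone_pow_dvd_aeval_coneContractionFun_iff (hf : f.IsHomogeneous d) (hprime : Prime f)
    (hfL : ¬ f ∣ L) (hh : h.IsHomogeneous e) :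
    cone f ^ m ∣ aeval (coneContractionFun f L) h ↔ h ∈ sectionIdeal f ^ m := by
  refine ⟨fun hdvd => ?_, cone_pow_dvd_of_mem_sectionIdeal_pow hf⟩
  induction m generalizing h e with
  | zero => simp
  | succ m ih =>
    have hrestrict : f ^ (m + 1) ∣ restrict h := by
      have hmap := map_dvd restrict hdvd
      rw [map_pow, restrict_cone, restrict_aeval_coneContractionFun hh] at hmap
      exact hprime.pow_dvd_of_dvd_mul_left _ (fun hL => hfL (hprime.dvd_of_dvd_pow hL)) hmap
    obtain ⟨b, hb, heq⟩ := exists_eq_cone_restrict_add hh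
    have hcone : cone (restrict h) ∈ sectionIdeal f ^ (m + 1) :=
      Ideal.mem_of_dvd _ (map_pow cone f _ ▸ cone_dvd_cone.2 hrestrict)
        (Ideal.pow_mem_pow cone_mem_sectionIdeal _)
    rw [heq, map_add, dvd_add_right (cone_pow_dvd_of_mem_sectionIdeal_pow hf hcone), map_mul,
      aeval_X, coneContractionFun_zero, mul_assoc, pow_succ',
      mul_dvd_mul_iff_left (cone_ne_zero hprime.ne_zero)] at hdvd
    have hbmem := ih hb ((prime_cone.2 hprime).pow_dvd_of_dvd_mul_left _
      (not_cone_dvd_X_zero hprime) hdvd)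
    rw [heq, pow_succ']
    exact add_mem (pow_succ' (sectionIdeal f) m ▸ hcone)
      (Ideal.mul_mem_mul X_zero_mem_sectionIdeal hbmem)

end Cone

section ConeEquiv

/-- The homogeneous coordinate vector `x` is a generic point of the hypersurface `f = 0`. -/
def IsGenericZero {k ι K : Type*} [Field k] [Field K] [Algebra k K] (f : MvPolynomial ι k)
    (x : ι → K) : Prop :=
  ∀ ⦃d : ℕ⦄ ⦃h : MvPolynomial ι k⦄, h.IsHomogeneous d → (aeval x h = 0 ↔ f ∣ h)

variable {k K : Type*} [Field k] [Field K] [Algebra k K] {n d₁ d₂ e m : ℕ}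
  {f f₁ f₂ L₁ L₂ : MvPolynomial (Fin n) k} {h q : MvPolynomial (Fin (n + 1)) k} {x y : Fin n → K}
  {Φ : CremonaMap k (Fin (n + 1))}

theorem IsGenericZero.mem_sectionIdeal_iff (hx : IsGenericZero f x) (hh : h.IsHomogeneous e) :
    h ∈ sectionIdeal f ↔ aeval (Fin.cons 0 x : Fin (n + 1) → K) h = 0 := by
  rw [Cremona.mem_sectionIdeal_iff, aeval_cons_zero, hx (isHomogeneous_restrict hh)]

namespace CremonaMap

theorem pullback_mem_sectionIdeal_pow (hf₂ : f₂.IsHomogeneous d₂) (hx : IsGenericZero f₁ x)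
    (hy : IsGenericZero f₂ y) (H : Φ.SendsPoint (Fin.cons 0 x) (Fin.cons 0 y))
    (hh : h ∈ sectionIdeal f₂ ^ m) : Φ.pullback h ∈ sectionIdeal f₁ ^ m := by
  have hmem ⦃c : ℕ⦄ ⦃p : MvPolynomial (Fin (n + 1)) k⦄ (hp : p.IsHomogeneous c)
      (hp₂ : p ∈ sectionIdeal f₂) : Φ.pullback p ∈ sectionIdeal f₁ := by
    rwa [hx.mem_sectionIdeal_iff (Φ.pullback_isHomogeneous hp), H.aeval_pullback_eq_zero_iff hp,
      ← hy.mem_sectionIdeal_iff hp]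
  exact map_mem_pow_of_mem_sectionIdeal_pow Φ.pullback.toRingHom
    (hmem (isHomogeneous_X k 0) X_zero_mem_sectionIdeal)
    (hmem (isHomogeneous_cone hf₂) cone_mem_sectionIdeal) hh

theorem cone_pow_dvd_pullback_iff (hf₁ : f₁.IsHomogeneous d₁) (hf₂ : f₂.IsHomogeneous d₂)
    (hp₁ : Prime f₁) (hp₂ : Prime f₂) (hL₁ : ¬ f₁ ∣ L₁) (hL₂ : ¬ f₂ ∣ L₂)
    (hx : IsGenericZero f₁ x) (hy : IsGenericZero f₂ y) (hy0 : y ≠ 0)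
    (H : Φ.SendsPoint (Fin.cons 0 x) (Fin.cons 0 y))
    (H' : Φ.symm.SendsPoint (Fin.cons 0 y) (Fin.cons 0 x)) (hq : q.IsHomogeneous e) :
    cone f₁ ^ m ∣ aeval (coneContractionFun f₁ L₁) (Φ.pullback q) ↔
      cone f₂ ^ m ∣ aeval (coneContractionFun f₂ L₂) q := by
  rw [cone_pow_dvd_aeval_coneContractionFun_iff hf₁ hp₁ hL₁ (Φ.pullback_isHomogeneous hq),
    cone_pow_dvd_aeval_coneContractionFun_iff hf₂ hp₂ hL₂ hq]
  refine ⟨fun hmem => ?_, pullback_mem_sectionIdeal_pow hf₂ hx hy H⟩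
  have hback := cone_pow_dvd_of_mem_sectionIdeal_pow (L := L₂) hf₂
    (pullback_mem_sectionIdeal_pow hf₁ hy hx H' hmem)
  obtain ⟨w, hw⟩ := Φ.symm.exists_isHomogeneous_factor
  have hfactor : ¬ cone f₂ ∣ aeval (coneContractionFun f₂ L₂) Φ.symm.factor := by
    rw [← pow_one (cone f₂), cone_pow_dvd_aeval_coneContractionFun_iff hf₂ hp₂ hL₂ hw, pow_one,
      hy.mem_sectionIdeal_iff hw]
    refine H'.aeval_factor_ne_zero H fun h0 => hy0 (funext fun j => ?_)
    simpa only [Fin.cons_succ, Pi.zero_apply] using congrFun h0 j.succ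
  have hprime := prime_cone.2 hp₂
  rw [Φ.symm_pullback_pullback hq, map_mul, map_pow] at hback
  exact (cone_pow_dvd_aeval_coneContractionFun_iff hf₂ hp₂ hL₂ hq).1
    (hprime.pow_dvd_of_dvd_mul_left _ (fun hdvd => hfactor (hprime.dvd_of_dvd_pow hdvd)) hback)

theorem cone_pow_dvd_pullback_pullback_pullback_iff (hf₁ : f₁.IsHomogeneous d₁)
    (hf₂ : f₂.IsHomogeneous d₂) (hL₁ : L₁.IsHomogeneous d₁) (hL₂ : L₂.IsHomogeneous d₂)
    (hp₁ : Prime f₁) (hp₂ : Prime f₂) (hL₁0 : L₁ ≠ 0) (hL₂0 : L₂ ≠ 0)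
    (hfL₁ : ¬ f₁ ∣ L₁) (hfL₂ : ¬ f₂ ∣ L₂)
    (hx : IsGenericZero f₁ x) (hy : IsGenericZero f₂ y) (hy0 : y ≠ 0)
    (H : Φ.SendsPoint (Fin.cons 0 x) (Fin.cons 0 y))
    (H' : Φ.symm.SendsPoint (Fin.cons 0 y) (Fin.cons 0 x)) (hq : q.IsHomogeneous e) :
    cone f₁ ^ (e + m) ∣ (coneContraction hf₁ hL₁ hp₁.ne_zero hL₁0).pullback (Φ.pullback
      ((coneContraction hf₂ hL₂ hp₂.ne_zero hL₂0).symm.pullback q)) ↔ cone f₂ ^ m ∣ q := by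
  have hprime := prime_cone.2 hp₂
  have hdvd := (coneContraction hf₂ hL₂ hp₂.ne_zero hL₂0).pullback_symm_pullback hq
  rw [coneContraction_factor, map_mul, mul_pow, mul_assoc] at hdvd
  change aeval (coneContractionFun f₂ L₂) _ = _ at hdvd
  refine (cone_pow_dvd_pullback_iff hf₁ hf₂ hp₁ hp₂ hfL₁ hfL₂ hx hy hy0 H H'
    ((coneContraction hf₂ hL₂ hp₂.ne_zero hL₂0).symm.pullback_isHomogeneous hq)).trans ?_
  rw [hdvd, pow_add, mul_dvd_mul_iff_left (pow_ne_zero _ hprime.ne_zero)]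
  refine ⟨hprime.pow_dvd_of_dvd_mul_left _ fun h => ?_, fun h => h.mul_left _⟩
  exact hfL₂ (hp₂.dvd_of_dvd_pow (cone_dvd_cone.1 (hprime.dvd_of_dvd_pow h)))

end CremonaMap

theorem IsGenericZero.exists_isHomogeneous_not_dvd (hx : IsGenericZero f x) (hx0 : x ≠ 0) (d : ℕ) :
    ∃ L, L.IsHomogeneous d ∧ ¬ f ∣ L := by
  obtain ⟨i, hi⟩ := Function.ne_iff.1 hx0
  refine ⟨X i ^ d, isHomogeneous_X_pow i d, fun hdvd => pow_ne_zero d hi ?_⟩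
  rw [← aeval_X (R := k) x i, ← map_pow, hx (isHomogeneous_X_pow i d)]
  exact hdvd

theorem DivisorEquiv.cone_of_pointEquiv (hf₁ : f₁.IsHomogeneous d₁) (hf₂ : f₂.IsHomogeneous d₂)
    (hp₁ : Prime f₁) (hp₂ : Prime f₂) (hx : IsGenericZero f₁ x) (hy : IsGenericZero f₂ y)
    (hx0 : x ≠ 0) (hy0 : y ≠ 0)
    (H : PointEquiv k (Fin.cons 0 x : Fin (n + 1) → K) (Fin.cons 0 y)) :
    DivisorEquiv (cone f₁) (cone f₂) := by
  obtain ⟨Φ, H, H'⟩ := H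
  obtain ⟨j, -⟩ := Function.ne_iff.1 hx0
  have : Nontrivial (Fin (n + 1)) := ⟨0, j.succ, (Fin.succ_ne_zero j).symm⟩
  obtain ⟨L₁, hL₁, hfL₁⟩ := hx.exists_isHomogeneous_not_dvd hx0 d₁
  obtain ⟨L₂, hL₂, hfL₂⟩ := hy.exists_isHomogeneous_not_dvd hy0 d₂
  have hL₁0 : L₁ ≠ 0 := fun h => hfL₁ (h ▸ dvd_zero f₁)
  have hL₂0 : L₂ ≠ 0 := fun h => hfL₂ (h ▸ dvd_zero f₂)
  -- The components of `Ψ` are all divisible by the equation of the first cone and those of its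
  -- inverse by the equation of the second one; these factors have to be cancelled.
  let Ψ := ((coneContraction hf₁ hL₁ hp₁.ne_zero hL₁0).trans Φ).trans
    (coneContraction hf₂ hL₂ hp₂.ne_zero hL₂0).symm
  have key (m : ℕ) ⦃e : ℕ⦄ ⦃q : MvPolynomial (Fin (n + 1)) k⦄ (hq : q.IsHomogeneous e) :
      cone f₁ ^ (e + m) ∣ Ψ.pullback q ↔ cone f₂ ^ m ∣ q := by
    rw [CremonaMap.pullback_trans, CremonaMap.pullback_trans]
    exact CremonaMap.cone_pow_dvd_pullback_pullback_pullback_iff hf₁ hf₂ hL₁ hL₂ hp₁ hp₂ hL₁0 hL₂0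
      hfL₁ hfL₂ hx hy hy0 H H' hq
  have key' (m : ℕ) ⦃e : ℕ⦄ ⦃q : MvPolynomial (Fin (n + 1)) k⦄ (hq : q.IsHomogeneous e) :
      cone f₂ ^ (e + m) ∣ Ψ.symm.pullback q ↔ cone f₁ ^ m ∣ q := by
    rw [CremonaMap.symm_trans, CremonaMap.symm_trans, CremonaMap.pullback_trans,
      CremonaMap.pullback_trans]
    exact CremonaMap.cone_pow_dvd_pullback_pullback_pullback_iff hf₂ hf₁ hL₂ hL₁ hp₂ hp₁ hL₂0 hL₁0
      hfL₂ hfL₁ hy hx hx0 H' H hq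
  refine of_pow_dvd_pullback (r := 1) (r' := 1) Ψ (isHomogeneous_cone hf₁) (isHomogeneous_cone hf₂)
    (cone_ne_zero hp₁.ne_zero) (cone_ne_zero hp₂.ne_zero) (fun i => ?_) (fun i => ?_)
    (fun d h hh => ?_) fun d h hh => ?_
  · exact ((key 0 (isHomogeneous_X k i)).2 (one_dvd _)).trans (Ψ.pullback_X i).dvd
  · exact ((key' 0 (isHomogeneous_X k i)).2 (one_dvd _)).trans (Ψ.symm.pullback_X i).dvd
  · simpa only [one_mul, pow_one] using key 1 hh
  · simpa only [one_mul, pow_one] using key' 1 hh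

end ConeEquiv

section Zeros

theorem dvd_iff_forall_eval_eq_zero {k ι : Type*} [Field k] [IsAlgClosed k] [Finite ι]
    {f h : MvPolynomial ι k} (hf : (Ideal.span {f}).IsPrime) :
    f ∣ h ↔ ∀ v, eval v f = 0 → eval v h = 0 := by
  refine ⟨fun hdvd v hv => zero_dvd_iff.1 (hv ▸ map_dvd (eval v) hdvd), fun H => ?_⟩
  rw [← Ideal.mem_span_singleton, ← IsPrime.vanishingIdeal_zeroLocus (K := k) (Ideal.span {f}),
    mem_vanishingIdeal_iff]
  exact fun v hv => H v (hv f (Ideal.mem_span_singleton_self f))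

theorem dvd_iff_forall_ne_zero_eval_eq_zero {k ι : Type*} [Field k] [IsAlgClosed k] [Finite ι]
    {f h : MvPolynomial ι k} (hf : (Ideal.span {f}).IsPrime) {i : ι} (hi : ¬ f ∣ X i) :
    f ∣ h ↔ ∀ v ≠ 0, eval v f = 0 → eval v h = 0 := by
  refine ⟨fun hdvd v _ => (dvd_iff_forall_eval_eq_zero hf).1 hdvd v, fun H => ?_⟩
  have hdvd : f ∣ h * X i := (dvd_iff_forall_eval_eq_zero hf).2 fun v hv => by
    obtain rfl | hv0 := eq_or_ne v 0
    · simp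
    · rw [map_mul, H v hv0 hv, zero_mul]
  simp only [← Ideal.mem_span_singleton] at hdvd hi ⊢
  exact (hf.mem_or_mem hdvd).resolve_right hi

variable {k : Type} [Field k] {n m d e : ℕ} {f h : MvPolynomial (Fin (n + 1)) k}
  {v : Fin (n + 1) → k} {x : ProjSp k n}

theorem eval_smul_eq_pow_mul_eval {ι : Type*} {h : MvPolynomial ι k} (hh : h.IsHomogeneous d)
    (c : k) (v : ι → k) : eval (c • v) h = c ^ d * eval v h :=
  aeval_eq_pow_mul_aeval hh fun _ => rfl

theorem mk_mem_zeros_iff (hh : h.IsHomogeneous d) (hv : v ≠ 0) :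
    Projectivization.mk k v hv ∈ zeros k h ↔ eval v h = 0 := by
  obtain ⟨a, ha⟩ := Projectivization.exists_smul_eq_mk_rep k v hv
  rw [zeros, Set.mem_ofPred_eq, ← ha, Units.smul_def, eval_smul_eq_pow_mul_eval hh, mul_eq_zero,
    or_iff_right (pow_ne_zero d a.ne_zero)]

theorem exists_not_dvd_X_of_eval_eq_zero {ι : Type*} {f : MvPolynomial ι k} {v : ι → k}
    (hv : v ≠ 0) (hf : eval v f = 0) : ∃ i, ¬ f ∣ X i := by
  obtain ⟨i, hi⟩ := Function.ne_iff.1 hv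
  refine ⟨i, fun hdvd => hi ?_⟩
  have hXi := map_dvd (eval v) hdvd
  rwa [hf, eval_X, zero_dvd_iff] at hXi

theorem zeros_subset_zeros_iff_dvd [IsAlgClosed k] (hf : f.IsHomogeneous d)
    (hh : h.IsHomogeneous e) (hp : (Ideal.span {f}).IsPrime) {i : Fin (n + 1)}
    (hi : ¬ f ∣ X i) : zeros k f ⊆ zeros k h ↔ f ∣ h := by
  rw [dvd_iff_forall_ne_zero_eval_eq_zero hp hi]
  refine ⟨fun H v hv hfv => ?_, fun H x => H x.rep x.rep_nonzero⟩
  exact (mk_mem_zeros_iff hh hv).1 (H ((mk_mem_zeros_iff hf hv).2 hfv))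

theorem exists_smul_eval_rep_mk (F : RatMap k n m) (hv : v ≠ 0) :
    ∃ a : kˣ, (fun i => eval (Projectivization.mk k v hv).rep (F.comp i)) =
      a • fun i => eval v (F.comp i) := by
  obtain ⟨a, ha⟩ := Projectivization.exists_smul_eq_mk_rep k v hv
  refine ⟨a ^ F.deg, funext fun i => ?_⟩
  rw [← ha, Units.smul_def, eval_smul_eq_pow_mul_eval (F.homog i), Pi.smul_apply, Units.smul_def,
    Units.val_pow_eq_pow_val, smul_eq_mul]

theorem defined_mk_iff (F : RatMap k n m) (hv : v ≠ 0) :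
    F.Defined (Projectivization.mk k v hv) ↔ (fun i => eval v (F.comp i)) ≠ 0 := by
  obtain ⟨a, ha⟩ := exists_smul_eval_rep_mk F hv
  rw [RatMap.Defined, ha, ne_eq, smul_eq_zero_iff_eq]

theorem app_eq_mk {F : RatMap k n m} (hx : (fun i => eval x.rep (F.comp i)) ≠ 0) :
    F.app x = Projectivization.mk k _ hx :=
  dif_pos hx

theorem app_mk (F : RatMap k n m) (hv : v ≠ 0) (hFv : (fun i => eval v (F.comp i)) ≠ 0) :
    F.app (Projectivization.mk k v hv) = Projectivization.mk k _ hFv := by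
  have hdef : (fun i => eval (Projectivization.mk k v hv).rep (F.comp i)) ≠ 0 :=
    (defined_mk_iff F hv).2 hFv
  rw [app_eq_mk hdef, Projectivization.mk_eq_mk_iff]
  obtain ⟨a, ha⟩ := exists_smul_eval_rep_mk F hv
  exact ⟨a, ha.symm⟩

theorem app_mem_zeros_iff {F : RatMap k n m} (hx : F.Defined x)
    {q : MvPolynomial (Fin (m + 1)) k} (hq : q.IsHomogeneous d) :
    F.app x ∈ zeros k q ↔ x ∈ zeros k (aeval F.comp q) := by
  rw [app_eq_mk hx, mk_mem_zeros_iff hq hx, zeros, Set.mem_ofPred_eq, ← coe_aeval_eq_eval,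
    ← coe_aeval_eq_eval]
  exact Eq.congr_left (comp_aeval_apply F.comp (aeval x.rep) q).symm

end Zeros

namespace CremonaMap

variable {k : Type} [Field k] {n d d' : ℕ} (Φ : CremonaMap k (Fin (n + 1)))
  {f f' : MvPolynomial (Fin (n + 1)) k} {v : Fin (n + 1) → k} {x : ProjSp k n}

/-- The rational map underlying a Cremona transformation. -/
def toRatMap : RatMap k n n where
  deg := Φ.deg
  comp := Φ.toFun
  homog := Φ.isHomogeneous_toFun

theorem eval_invFun_eval_toFun (v : Fin (n + 1) → k) :
    (fun i => eval (fun j => eval v (Φ.toFun j)) (Φ.invFun i)) = eval v Φ.factor • v := by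
  funext i
  have key := congrArg (aeval v) (Φ.aeval_toFun_invFun i)
  rw [comp_aeval_apply, map_mul, aeval_X] at key
  exact key

theorem eval_toFun_ne_zero (hv : v ≠ 0) (hfactor : eval v Φ.factor ≠ 0) :
    (fun i => eval v (Φ.toFun i)) ≠ 0 := by
  intro h0
  have heq : (fun j => eval (0 : Fin (n + 1) → k) (Φ.toFun j)) = fun j => eval v (Φ.toFun j) := by
    funext j
    rw [← zero_smul k v, eval_smul_eq_pow_mul_eval (Φ.isHomogeneous_toFun j), congrFun h0 j,
      Pi.zero_apply, mul_zero]
  have hzero := Φ.eval_invFun_eval_toFun 0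
  rw [heq, Φ.eval_invFun_eval_toFun, smul_zero] at hzero
  exact smul_ne_zero hfactor hv hzero

theorem defined_toRatMap (hx : x ∉ zeros k Φ.factor) : Φ.toRatMap.Defined x :=
  Φ.eval_toFun_ne_zero x.rep_nonzero hx

theorem symm_toRatMap_app_toRatMap_app (hx : x ∉ zeros k Φ.factor) :
    Φ.symm.toRatMap.Defined (Φ.toRatMap.app x) ∧
      Φ.symm.toRatMap.app (Φ.toRatMap.app x) = x := by
  have hΦx := Φ.defined_toRatMap hx
  have hback := Φ.eval_invFun_eval_toFun x.rep
  have hne : (fun i => eval (fun j => eval x.rep (Φ.toFun j)) (Φ.invFun i)) ≠ 0 :=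
    hback ▸ smul_ne_zero hx x.rep_nonzero
  rw [app_eq_mk hΦx]
  refine ⟨(defined_mk_iff _ hΦx).2 hne, (app_mk Φ.symm.toRatMap hΦx hne).trans ?_⟩
  conv_rhs => rw [← x.mk_rep]
  exact (Projectivization.mk_eq_mk_iff' _ _ _ _ _).2 ⟨_, hback.symm⟩

theorem toRatMap_app_mem_zeros (hf' : f'.IsHomogeneous d') (hdvd : f ∣ Φ.pullback f')
    (hxf : x ∈ zeros k f) (hx : x ∉ zeros k Φ.factor) : Φ.toRatMap.app x ∈ zeros k f' :=
  (app_mem_zeros_iff (Φ.defined_toRatMap hx) hf').2 <|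
    zero_dvd_iff.1 ((show eval x.rep f = 0 from hxf) ▸ map_dvd (eval x.rep) hdvd)

theorem isBirationalOn_zeros (hf : f.IsHomogeneous d) (hf' : f'.IsHomogeneous d')
    (hdvd : f ∣ Φ.pullback f') (hdvd' : f' ∣ Φ.symm.pullback f)
    (hfactor : ¬ zeros k f ⊆ zeros k Φ.factor) (hfactor' : ¬ zeros k f' ⊆ zeros k Φ.invFactor) :
    IsBirationalOn k Φ.toRatMap Φ.symm.toRatMap (zeros k f) (zeros k f') := by
  obtain ⟨w, hw⟩ := Φ.exists_isHomogeneous_factor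
  obtain ⟨w', hw'⟩ := Φ.symm.exists_isHomogeneous_factor
  exact ⟨Φ.factor, Φ.invFactor, w, w', hw, hw', hfactor, hfactor',
    fun x hx => ⟨Φ.defined_toRatMap hx.2, Φ.toRatMap_app_mem_zeros hf' hdvd hx.1 hx.2,
      Φ.symm_toRatMap_app_toRatMap_app hx.2⟩,
    fun y hy => ⟨Φ.symm.defined_toRatMap hy.2, Φ.symm.toRatMap_app_mem_zeros hf hdvd' hy.1 hy.2,
      Φ.symm.symm_toRatMap_app_toRatMap_app hy.2⟩⟩

end CremonaMap

theorem DivisorEquiv.cremonaEquivalent {k : Type} [Field k] [IsAlgClosed k] {n d d' : ℕ}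
    {f f' : MvPolynomial (Fin (n + 1)) k} (H : DivisorEquiv f f') (hf : f.IsHomogeneous d)
    (hf' : f'.IsHomogeneous d') (hp : Prime f) (hp' : Prime f') (hne : (zeros k f).Nonempty)
    (hne' : (zeros k f').Nonempty) : CremonaEquivalent k (zeros k f) (zeros k f') := by
  obtain ⟨Φ, hΦ, hΦ'⟩ := H
  have not_subset {g h : MvPolynomial (Fin (n + 1)) k} {e w : ℕ} (hg : g.IsHomogeneous e)
      (hh : h.IsHomogeneous w) (hp : (Ideal.span {g}).IsPrime) {i : Fin (n + 1)}
      (hi : ¬ g ∣ X i) (hdvd : ¬ g ∣ h) : ¬ zeros k g ⊆ zeros k h :=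
    (zeros_subset_zeros_iff_dvd hg hh hp hi).not.2 hdvd
  obtain ⟨w, hw⟩ := Φ.exists_isHomogeneous_factor
  obtain ⟨w', hw'⟩ := Φ.symm.exists_isHomogeneous_factor
  refine ⟨Φ.toRatMap, Φ.symm.toRatMap, ?_, ?_⟩
  · have hprime : (Ideal.span {(0 : MvPolynomial (Fin (n + 1)) k)}).IsPrime := by
      rw [Ideal.span_singleton_zero]
      exact Ideal.isPrime_bot
    have hzero := isHomogeneous_zero (Fin (n + 1)) k 0
    have hX : ¬ (0 : MvPolynomial (Fin (n + 1)) k) ∣ X 0 := by simp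
    have huniv : zeros k (0 : MvPolynomial (Fin (n + 1)) k) = Set.univ :=
      Set.eq_univ_of_forall fun x => map_zero (eval x.rep)
    rw [← huniv]
    exact Φ.isBirationalOn_zeros hzero hzero (by simp) (by simp)
      (not_subset hzero hw hprime hX (by simpa using Φ.factor_ne_zero))
      (not_subset hzero hw' hprime hX (by simpa using Φ.invFactor_ne_zero))
  · obtain ⟨x, hx⟩ := hne
    obtain ⟨x', hx'⟩ := hne'
    obtain ⟨i, hi⟩ := exists_not_dvd_X_of_eval_eq_zero x.rep_nonzero hx
    obtain ⟨i', hi'⟩ := exists_not_dvd_X_of_eval_eq_zero x'.rep_nonzero hx'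
    exact Φ.isBirationalOn_zeros hf hf' ((hΦ hf').2 dvd_rfl) ((hΦ' hf).2 dvd_rfl)
      (not_subset hf hw ((Ideal.span_singleton_prime hp.ne_zero).2 hp) hi
        (hΦ.not_dvd_factor hΦ' hi))
      (not_subset hf' hw' ((Ideal.span_singleton_prime hp'.ne_zero).2 hp') hi'
        (hΦ'.not_dvd_factor hΦ hi'))

section GenericPoint

theorem IsGenericZero.smul {k ι K : Type*} [Field k] [Field K] [Algebra k K]
    {f : MvPolynomial ι k} {x : ι → K} (hx : IsGenericZero f x) {c : K} (hc : c ≠ 0) :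
    IsGenericZero f (c • x) := fun d h hh => by
  rw [aeval_eq_pow_mul_aeval hh (y := c • x) (fun _ => rfl), mul_eq_zero,
    or_iff_right (pow_ne_zero d hc), hx hh]

theorem isGenericZero_algebraMap_mk_X {k ι : Type*} [Field k] {f : MvPolynomial ι k} {L : Type*}
    [Field L] [Algebra k L] [Algebra (MvPolynomial ι k ⧸ Ideal.span {f}) L]
    [IsScalarTower k (MvPolynomial ι k ⧸ Ideal.span {f}) L]
    [FaithfulSMul (MvPolynomial ι k ⧸ Ideal.span {f}) L] :
    IsGenericZero f fun i => algebraMap _ L (Ideal.Quotient.mk (Ideal.span {f}) (X i)) := by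
  intro d h _
  have key := aeval_algebraMap_apply L (fun i => Ideal.Quotient.mkₐ k (Ideal.span {f}) (X i)) h
  refine (Eq.congr_left key).trans ?_
  rw [FaithfulSMul.algebraMap_eq_zero_iff, ← comp_aeval_apply, aeval_X_left_apply,
    Ideal.Quotient.mkₐ_eq_mk, Ideal.Quotient.eq_zero_iff_mem, Ideal.mem_span_singleton]

theorem exists_isGenericZero.{u, v} {k : Type u} {ι : Type v} [Field k] {f : MvPolynomial ι k}
    (hp : Prime f) {i : ι} (hi : ¬ f ∣ X i) :
    ∃ (K : Type max u v) (_ : Field K) (_ : Algebra k K) (x : ι → K), x i = 1 ∧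
      IntermediateField.adjoin k (Set.range x) = ⊤ ∧ IsGenericZero f x := by
  have : (Ideal.span {f}).IsPrime := (Ideal.span_singleton_prime hp.ne_zero).2 hp
  let L := FractionRing (MvPolynomial ι k ⧸ Ideal.span {f})
  let y : ι → L := fun i => algebraMap _ L (Ideal.Quotient.mk (Ideal.span {f}) (X i))
  have hy : IsGenericZero f y := isGenericZero_algebraMap_mk_X
  have hyi : y i ≠ 0 := by rwa [← aeval_X (R := k) y i, ne_eq, hy (isHomogeneous_X k i)]
  let K := IntermediateField.adjoin k (Set.range ((y i)⁻¹ • y))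
  let x : ι → K := fun j => ⟨_, IntermediateField.subset_adjoin k _ ⟨j, rfl⟩⟩
  refine ⟨K, inferInstance, inferInstance, x, Subtype.ext (inv_mul_cancel₀ hyi), ?_, ?_⟩
  · apply IntermediateField.map_injective K.val
    rw [IntermediateField.adjoin_map, ← Set.range_comp, ← AlgHom.fieldRange_eq_map,
      IntermediateField.fieldRange_val]
    rfl
  · intro d h hh
    rw [← hy.smul (inv_ne_zero hyi) hh, ← map_eq_zero (algebraMap K L), ← aeval_algebraMap_apply]
    rfl

variable {k : Type} {K L : Type*} [Field k] [Field K] [Algebra k K] [Field L] [Algebra k L]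
  {n m d : ℕ} {A : Set (ProjSp k n)} {B : Set (ProjSp k m)} {F : RatMap k n m} {G : RatMap k m n}
  {ξ : Fin (n + 1) → K} {ζ : Fin (m + 1) → L}

/-- The homogeneous coordinate vector `ξ` is a generic point of the Zariski closure of `A`. -/
def IsGenericPoint (A : Set (ProjSp k n)) (ξ : Fin (n + 1) → K) : Prop :=
  ∀ ⦃d : ℕ⦄ ⦃h : MvPolynomial (Fin (n + 1)) k⦄, h.IsHomogeneous d →
    (aeval ξ h = 0 ↔ A ⊆ zeros k h)

theorem mem_zeros_mul_iff {x : ProjSp k n} {g h : MvPolynomial (Fin (n + 1)) k} :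
    x ∈ zeros k (g * h) ↔ x ∈ zeros k g ∨ x ∈ zeros k h := by
  simp only [zeros, Set.mem_ofPred_eq, map_mul, mul_eq_zero]

theorem IsGenericPoint.subset_zeros_of_forall_mem_sdiff (hξ : IsGenericPoint A ξ) {e : ℕ}
    {u h : MvPolynomial (Fin (n + 1)) k} (hu : u.IsHomogeneous d) (hh : h.IsHomogeneous e)
    (hAu : ¬ A ⊆ zeros k u) (H : ∀ x ∈ A \ zeros k u, x ∈ zeros k h) : A ⊆ zeros k h := by
  have hmul : aeval ξ (u * h) = 0 := (hξ (hu.mul hh)).2 fun x hx =>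
    mem_zeros_mul_iff.2 (or_iff_not_imp_left.2 fun hxu => H x ⟨hx, hxu⟩)
  rw [map_mul, mul_eq_zero, hξ hu, hξ hh] at hmul
  exact hmul.resolve_left hAu

theorem nonempty_of_isBirationalOn (H : IsBirationalOn k F G A B) : A.Nonempty ∧ B.Nonempty := by
  obtain ⟨u, v, du, dv, -, -, hAu, hBv, -⟩ := H
  exact ⟨(Set.not_subset.1 hAu).imp fun _ => And.left, (Set.not_subset.1 hBv).imp fun _ => And.left⟩

theorem IsGenericPoint.map (hξ : IsGenericPoint A ξ) (hζ : IsGenericPoint B ζ)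
    (H : IsBirationalOn k F G A B) : IsGenericPoint B fun i => aeval ξ (F.comp i) := by
  obtain ⟨u, v, du, dv, hu, hv, hAu, hBv, hF, hG⟩ := H
  intro d h hh
  rw [← comp_aeval_apply, hξ (hh.aeval _ F.homog)]
  constructor <;> intro hsub
  · refine hζ.subset_zeros_of_forall_mem_sdiff hv hh hBv fun y hy => ?_
    obtain ⟨-, hGy, hdef, happ⟩ := hG y hy
    rw [← happ]
    exact (app_mem_zeros_iff hdef hh).2 (hsub hGy)
  · refine hξ.subset_zeros_of_forall_mem_sdiff hu (hh.aeval _ F.homog) hAu fun x hx => ?_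
    obtain ⟨hdef, hFx, -, -⟩ := hF x hx
    exact (app_mem_zeros_iff hdef hh).1 (hsub hFx)

theorem exists_eval_comp_eq_smul_rep {x : ProjSp k n} (hFx : F.Defined x)
    (hGx : G.Defined (F.app x)) (hx : G.app (F.app x) = x) :
    ∃ c ≠ 0, ∀ i, eval x.rep (aeval F.comp (G.comp i)) = c * x.rep i := by
  rw [app_eq_mk hFx] at hGx hx
  have hne := (defined_mk_iff G hFx).1 hGx
  rw [app_mk G hFx hne] at hx
  conv_rhs at hx => rw [← x.mk_rep]
  obtain ⟨a, ha⟩ := (Projectivization.mk_eq_mk_iff _ _ _ _ _).1 hx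
  refine ⟨a, a.ne_zero, fun i => ?_⟩
  exact (comp_aeval_apply F.comp (aeval x.rep) (G.comp i)).trans (congrFun ha i).symm

theorem IsGenericPoint.exists_aeval_comp_eq_mul (hξ : IsGenericPoint A ξ)
    (H : IsBirationalOn k F G A B) :
    ∃ c ≠ 0, ∀ i, aeval (fun j => aeval ξ (F.comp j)) (G.comp i) = c * ξ i := by
  obtain ⟨u, -, du, -, hu, -, hAu, -, hF, -⟩ := H
  have hGF (i) := (G.homog i).aeval _ F.homog
  have minor (i j) :
      aeval ξ (aeval F.comp (G.comp i) * X j - aeval F.comp (G.comp j) * X i) = 0 := by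
    have hhom (i j) := (hGF i).mul (isHomogeneous_X k j)
    refine (hξ ((hhom i j).sub (hhom j i))).2 <|
      hξ.subset_zeros_of_forall_mem_sdiff hu ((hhom i j).sub (hhom j i)) hAu fun x hx => ?_
    obtain ⟨hFx, -, hGx, happ⟩ := hF x hx
    obtain ⟨c, -, hc⟩ := exists_eval_comp_eq_smul_rep hFx hGx happ
    simp only [zeros, Set.mem_ofPred_eq, map_sub, map_mul, eval_X, hc]
    ring
  obtain ⟨x, hxA, hxu⟩ := Set.not_subset.1 hAu
  obtain ⟨hFx, -, hGx, happ⟩ := hF x ⟨hxA, hxu⟩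
  obtain ⟨c, hc0, hc⟩ := exists_eval_comp_eq_smul_rep hFx hGx happ
  obtain ⟨j, hj⟩ := Function.ne_iff.1 x.rep_nonzero
  have hξj : ξ j ≠ 0 := by
    rw [← aeval_X (R := k) ξ j, ne_eq, hξ (isHomogeneous_X k j)]
    exact fun hsub => hj ((eval_X j).symm.trans (hsub hxA))
  have hGFj : aeval ξ (aeval F.comp (G.comp j)) ≠ 0 := by
    rw [ne_eq, hξ (hGF j)]
    exact fun hsub => mul_ne_zero hc0 hj ((hc j).symm.trans (hsub hxA))
  refine ⟨aeval ξ (aeval F.comp (G.comp j)) / ξ j, div_ne_zero hGFj hξj, fun i => ?_⟩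
  have key := minor i j
  rw [map_sub, map_mul, map_mul, aeval_X, aeval_X, sub_eq_zero] at key
  rw [← comp_aeval_apply, div_mul_eq_mul_div, ← key, mul_div_cancel_right₀ _ hξj]

end GenericPoint

section Projectivity

variable {k ι : Type*} [Field k] [Fintype ι] [DecidableEq ι] {T : GL ι k} {f h : MvPolynomial ι k}

theorem eval_pullback_ofGL (T : GL ι k) (h : MvPolynomial ι k) (v : ι → k) :
    eval v ((CremonaMap.ofGL T).pullback h) = eval (T.val.mulVec v) h := by
  have hTv : (fun i => aeval v (T.val.toMvPolynomial i)) = T.val.mulVec v :=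
    funext fun i => T.val.toMvPolynomial_eval_eq_apply i v
  rw [← hTv]
  exact comp_aeval_apply T.val.toMvPolynomial (aeval v) h

theorem CremonaMap.pullback_symm_pullback_of_factor_eq_one {ι : Type*} {Φ : CremonaMap k ι}
    (hΦ : Φ.factor = 1) (h : MvPolynomial ι k) : Φ.pullback (Φ.symm.pullback h) = h := by
  simp only [pullback, comp_aeval_apply, symm_toFun, Φ.aeval_toFun_invFun, hΦ, one_mul,
    aeval_X_left_apply]

@[simp]
theorem pullback_symm_pullback_ofGL (T : GL ι k) (h : MvPolynomial ι k) :
    (CremonaMap.ofGL T).pullback ((CremonaMap.ofGL T).symm.pullback h) = h :=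
  CremonaMap.pullback_symm_pullback_of_factor_eq_one rfl h

@[simp]
theorem symm_pullback_pullback_ofGL (T : GL ι k) (h : MvPolynomial ι k) :
    (CremonaMap.ofGL T).symm.pullback ((CremonaMap.ofGL T).pullback h) = h :=
  CremonaMap.pullback_symm_pullback_of_factor_eq_one (Φ := (CremonaMap.ofGL T).symm) rfl h

theorem pullback_ofGL_dvd_pullback_ofGL :
    (CremonaMap.ofGL T).pullback f ∣ (CremonaMap.ofGL T).pullback h ↔ f ∣ h := by
  refine ⟨fun hdvd => ?_, fun hdvd => map_dvd _ hdvd⟩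
  simpa only [symm_pullback_pullback_ofGL] using map_dvd (CremonaMap.ofGL T).symm.pullback hdvd

theorem prime_pullback_ofGL (T : GL ι k) (hf : Prime f) : Prime ((CremonaMap.ofGL T).pullback f) :=
  comap_prime (CremonaMap.ofGL T).symm.pullback (CremonaMap.ofGL T).pullback
    (pullback_symm_pullback_ofGL T) (by rwa [symm_pullback_pullback_ofGL])

theorem divisorEquiv_pullback_ofGL (T : GL ι k) (f : MvPolynomial ι k) :
    DivisorEquiv ((CremonaMap.ofGL T).pullback f) f := by
  refine ⟨CremonaMap.ofGL T, fun d h _ => pullback_ofGL_dvd_pullback_ofGL, fun d h _ => ?_⟩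
  rw [← pullback_ofGL_dvd_pullback_ofGL (T := T), pullback_symm_pullback_ofGL]

open Module in
theorem exists_basis_zero_eq {V : Type*} [AddCommGroup V] [Module k V] {n : ℕ}
    (hV : finrank k V = n + 1) {ℓ : Dual k V} {p : V} (hp : ℓ p = 1) :
    ∃ b : Basis (Fin (n + 1)) k V, b 0 = p ∧ ∀ j : Fin n, ℓ (b j.succ) = 0 := by
  have hℓ : ℓ ≠ 0 := fun h0 => by simp [h0] at hp
  have : FiniteDimensional k V := .of_finrank_pos (hV ▸ n.succ_pos)
  have hker : finrank k (LinearMap.ker ℓ) = n := by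
    rw [← Nat.add_right_cancel_iff, Dual.finrank_ker_add_one_of_ne_zero hℓ, hV]
  let b := Basis.mkFinCons p (finBasisOfFinrankEq k (LinearMap.ker ℓ) hker)
    (fun c x hx hcx => by simpa [hp, LinearMap.mem_ker.1 hx] using congrArg ℓ hcx)
    fun z => ⟨-ℓ z, by simp [hp]⟩
  refine ⟨b, ?_, fun j => ?_⟩ <;> rw [Basis.coe_mkFinCons]
  · rw [Fin.cons_zero]
  · rw [Fin.cons_succ]
    exact SetLike.coe_mem (finBasisOfFinrankEq k (LinearMap.ker ℓ) hker j)

open Matrix in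
theorem exists_gl_mulVec_single_zero_eq {n : ℕ} {c p : Fin (n + 1) → k} (hcp : c ⬝ᵥ p = 1) :
    ∃ T : GL (Fin (n + 1)) k, T.val *ᵥ Pi.single 0 1 = p ∧ c ᵥ* T.val = Pi.single 0 1 := by
  obtain ⟨b, hb0, hb⟩ :=
    exists_basis_zero_eq (ℓ := dotProductBilin k k c) (Module.finrank_fin_fun k) hcp
  let T : GL (Fin (n + 1)) k := ⟨(Pi.basisFun k _).toMatrix b, b.toMatrix (Pi.basisFun k _),
    Module.Basis.toMatrix_mul_toMatrix_flip _ _, Module.Basis.toMatrix_mul_toMatrix_flip _ _⟩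
  refine ⟨T, ?_, funext fun j => ?_⟩
  · rw [mulVec_single_one, ← hb0]
    rfl
  · change c ⬝ᵥ b j = _
    cases j using Fin.cases with
    | zero => rw [hb0, hcp, Pi.single_eq_same]
    | succ j => rw [Pi.single_eq_of_ne (Fin.succ_ne_zero j)]; exact hb j

open Matrix in
theorem exists_eval_eq_dotProduct {ι : Type*} [Fintype ι] {h : MvPolynomial ι k}
    (hh : h.IsHomogeneous 1) : ∃ c : ι → k, ∀ v, eval v h = c ⬝ᵥ v := by
  rw [← mem_homogeneousSubmodule, homogeneousSubmodule_one_eq_span_X,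
    Submodule.mem_span_range_iff_exists_fun] at hh
  obtain ⟨c, rfl⟩ := hh
  exact ⟨c, fun v => by simp [dotProduct, smul_eval]⟩

end Projectivity

section ConeChart

variable {k : Type*} [Field k] {n d : ℕ} {f h : MvPolynomial (Fin (n + 1)) k}
  {g : MvPolynomial (Fin n) k} {T : GL (Fin (n + 1)) k}

theorem eval_cone (v : Fin (n + 1) → k) (p : MvPolynomial (Fin n) k) :
    eval v (cone p) = eval (Fin.tail v) p :=
  eval_rename _ _ _

theorem eval_cone_restrict (v : Fin (n + 1) → k) (h : MvPolynomial (Fin (n + 1)) k) :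
    eval v (cone (restrict h)) = eval (v + Pi.single 0 (-v 0)) h := by
  have hv : v + Pi.single 0 (-v 0) = Fin.cons 0 (Fin.tail v) := by
    ext j
    cases j using Fin.cases <;> simp [Fin.tail]
  rw [eval_cone, hv]
  exact (aeval_cons_zero (Fin.tail v) h).symm

theorem eq_cone_restrict [IsAlgClosed k] (hf : f.IsHomogeneous d) (hp : Prime f)
    (H : ∀ v c, eval v f = 0 → eval (v + Pi.single 0 c) f = 0) : f = cone (restrict f) := by
  have hdvd : f ∣ cone (restrict f) := by
    rw [dvd_iff_forall_eval_eq_zero ((Ideal.span_singleton_prime hp.ne_zero).2 hp)]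
    intro v hv
    rw [eval_cone_restrict]
    exact H v _ hv
  have hrestrict : restrict f ≠ 0 := fun h0 => hp.ne_zero <| MvPolynomial.funext fun v => by
    have hv := eval_cone_restrict v f
    rw [h0, map_zero, map_zero] at hv
    simpa [add_assoc, ← Pi.single_add] using H _ (v 0) hv.symm
  obtain ⟨b, hb⟩ := hdvd
  have hb0 : b.IsHomogeneous 0 := d.sub_self ▸ isHomogeneous_right_of_mul hf hp.ne_zero
    (hb ▸ isHomogeneous_cone (isHomogeneous_restrict hf))
  obtain ⟨c, rfl⟩ : ∃ c, b = C c :=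
    ⟨_, totalDegree_eq_zero_iff_eq_C.1 (Nat.le_zero.1 hb0.totalDegree_le)⟩
  have hc : C c = (1 : MvPolynomial (Fin n) k) := by
    have key := congrArg restrict hb
    rw [restrict_cone, map_mul, ← algebraMap_eq, AlgHom.commutes] at key
    exact (mul_eq_left₀ hrestrict).1 key.symm
  rw [hb, C_injective _ _ (hc.trans C_1.symm), C_1, mul_one]

/-- In the projective coordinates given by `T`, the hypersurface `f = 0` is the cone with vertex
`(1 : 0 : ⋯ : 0)` over `g = 0`, and `h = 0` is the hyperplane `X 0 = 0`. -/
structure IsConeChart (T : GL (Fin (n + 1)) k) (f h : MvPolynomial (Fin (n + 1)) k)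
    (g : MvPolynomial (Fin n) k) : Prop where
  pullback_cone : (CremonaMap.ofGL T).pullback f = cone g
  pullback_hyperplane : (CremonaMap.ofGL T).pullback h = X 0

theorem IsConeChart.prime (H : IsConeChart T f h g) (hf : Prime f) : Prime g :=
  prime_cone.1 (H.pullback_cone ▸ prime_pullback_ofGL T hf)

theorem IsConeChart.divisorEquiv (H : IsConeChart T f h g) : DivisorEquiv (cone g) f :=
  H.pullback_cone ▸ divisorEquiv_pullback_ofGL T f

end ConeChart

section ConeVertex

variable {k : Type} [Field k] {n d : ℕ} {f h : MvPolynomial (Fin (n + 1)) k} {p : ProjSp k n}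

theorem eval_add_smul_eq_zero (hcone : IsConeWithVertex k (zeros k f) p) (hf : f.IsHomogeneous d)
    {v : Fin (n + 1) → k} (hv : eval v f = 0) (c : k) : eval (v + c • p.rep) f = 0 := by
  obtain rfl | hv0 := eq_or_ne v 0
  · rw [zero_add, eval_smul_eq_pow_mul_eval hf, show eval p.rep f = 0 from hcone.1, mul_zero]
  obtain hw | hw := eq_or_ne (v + c • p.rep) 0
  · rw [hw, ← zero_smul k v, eval_smul_eq_pow_mul_eval hf, hv, mul_zero]
  rw [← mk_mem_zeros_iff hf hw]
  refine hcone.2 _ ((mk_mem_zeros_iff hf hv0).2 hv) ?_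
  rw [lineThrough, Set.mem_ofPred_eq, Projectivization.submodule_mk, Projectivization.submodule_mk,
    Projectivization.submodule_eq, Submodule.span_singleton_le_iff_mem, add_comm v]
  exact Submodule.add_mem_sup (Submodule.smul_mem _ _ (Submodule.mem_span_singleton_self _))
    (Submodule.mem_span_singleton_self _)

theorem exists_isConeChart [IsAlgClosed k] (hf : f.IsHomogeneous d) (hprime : Prime f)
    (hh : h.IsHomogeneous 1) (hcone : IsConeWithVertex k (zeros k f) p) (hph : p ∉ zeros k h) :
    ∃ T g, g.IsHomogeneous d ∧ IsConeChart T f h g := by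
  obtain ⟨c, hc⟩ := exists_eval_eq_dotProduct hh
  let a := (eval p.rep h)⁻¹
  obtain ⟨T, hTp, hTc⟩ := exists_gl_mulVec_single_zero_eq (c := c) (p := a • p.rep)
    (by rw [← hc, eval_smul_eq_pow_mul_eval hh, pow_one]; exact inv_mul_cancel₀ hph)
  have hf' : ((CremonaMap.ofGL T).pullback f).IsHomogeneous d :=
    one_mul d ▸ (CremonaMap.ofGL T).pullback_isHomogeneous hf
  refine ⟨T, restrict ((CremonaMap.ofGL T).pullback f), isHomogeneous_restrict hf',
    eq_cone_restrict hf' (prime_pullback_ofGL T hprime) fun v b hv => ?_,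
    MvPolynomial.funext fun v => ?_⟩
  · rw [eval_pullback_ofGL] at hv ⊢
    have hTb : T.val.mulVec (Pi.single 0 b) = (b * a) • p.rep := by
      rw [mul_smul, ← hTp, ← Matrix.mulVec_smul, ← Pi.single_smul, smul_eq_mul, mul_one]
    rw [Matrix.mulVec_add, hTb]
    exact eval_add_smul_eq_zero hcone hf hv _
  · rw [eval_pullback_ofGL, hc, Matrix.dotProduct_mulVec, hTc, single_one_dotProduct, eval_X]

end ConeVertex

section ChartPoint

variable {k K : Type*} [Field k] [Field K] [Algebra k K] {n : ℕ}
  {f h : MvPolynomial (Fin (n + 1)) k} {g : MvPolynomial (Fin n) k} {T : GL (Fin (n + 1)) k}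
  {x : Fin n → K}

/-- The point of the hyperplane `h = 0` with coordinates `x` in a cone chart `T`. -/
noncomputable def chartPoint (T : GL (Fin (n + 1)) k) (x : Fin n → K) : Fin (n + 1) → K :=
  fun i => aeval (Fin.cons 0 x : Fin (n + 1) → K) ((CremonaMap.ofGL T).toFun i)

theorem aeval_chartPoint (T : GL (Fin (n + 1)) k) (x : Fin n → K)
    (q : MvPolynomial (Fin (n + 1)) k) :
    aeval (chartPoint T x) q = aeval x (restrict ((CremonaMap.ofGL T).pullback q)) :=
  (comp_aeval_apply _ _ q).symm.trans (aeval_cons_zero x _)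

theorem aeval_chartPoint_symm_pullback_cone (T : GL (Fin (n + 1)) k) (x : Fin n → K)
    (q : MvPolynomial (Fin n) k) :
    aeval (chartPoint T x) ((CremonaMap.ofGL T).symm.pullback (cone q)) = aeval x q := by
  rw [aeval_chartPoint, pullback_symm_pullback_ofGL, restrict_cone]

theorem aeval_chartPoint_invFun_succ (T : GL (Fin (n + 1)) k) (x : Fin n → K) (j : Fin n) :
    aeval (chartPoint T x) ((CremonaMap.ofGL T).invFun j.succ) = x j := by
  have key := aeval_chartPoint_symm_pullback_cone T x (X j)
  rwa [cone, rename_X, CremonaMap.pullback_X, aeval_X] at key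

theorem generates_chartPoint_iff : Generates k (chartPoint T x) ↔ Generates k x := by
  constructor <;> intro H
  · refine H.of_eq_mul_aeval (c := 1) (P := fun i => restrict ((CremonaMap.ofGL T).toFun i))
      (fun i => isHomogeneous_restrict ((CremonaMap.ofGL T).isHomogeneous_toFun i)) fun i => ?_
    rw [one_mul, ← aeval_cons_zero, chartPoint]
  · refine H.of_eq_mul_aeval (c := 1) (P := fun j => (CremonaMap.ofGL T).invFun j.succ)
      (fun j => (CremonaMap.ofGL T).isHomogeneous_invFun _) fun j => ?_
    rw [one_mul, aeval_chartPoint_invFun_succ]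

theorem aeval_zero_eq_zero {ι : Type*} {d : ℕ} {q : MvPolynomial ι k} (hq : q.IsHomogeneous d)
    (hd : d ≠ 0) : aeval (0 : ι → K) q = 0 := by
  rw [aeval_eq_pow_mul_aeval hq (c := 0) (x := 0) fun _ => (mul_zero 0).symm, zero_pow hd, zero_mul]

theorem chartPoint_ne_zero_iff : chartPoint T x ≠ 0 ↔ x ≠ 0 := by
  refine not_congr ⟨fun h0 => funext fun j => ?_, fun h0 => funext fun i => ?_⟩
  · rw [← aeval_chartPoint_invFun_succ T x j, h0]
    exact aeval_zero_eq_zero ((CremonaMap.ofGL T).isHomogeneous_invFun _) one_ne_zero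
  · rw [chartPoint, h0, show (Fin.cons 0 0 : Fin (n + 1) → K) = 0 from Matrix.cons_zero_zero]
    exact aeval_zero_eq_zero ((CremonaMap.ofGL T).isHomogeneous_toFun i) one_ne_zero

theorem IsConeChart.exists_eq_chartPoint (H : IsConeChart T f h g) {η : Fin (n + 1) → K}
    (hη : aeval η h = 0) : ∃ y : Fin n → K, η = chartPoint T y := by
  refine ⟨fun j => aeval η ((CremonaMap.ofGL T).invFun j.succ), funext fun i => ?_⟩
  have hcons : (Fin.cons 0 fun j => aeval η ((CremonaMap.ofGL T).invFun j.succ) :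
      Fin (n + 1) → K) = fun j => aeval η ((CremonaMap.ofGL T).invFun j) := by
    funext j
    cases j using Fin.cases with
    | zero =>
      rw [Fin.cons_zero, ← CremonaMap.symm_toFun, ← CremonaMap.pullback_X, ← H.pullback_hyperplane,
        symm_pullback_pullback_ofGL, hη]
    | succ j => rw [Fin.cons_succ]
  rw [chartPoint, hcons, ← comp_aeval_apply, CremonaMap.aeval_invFun_toFun,
    CremonaMap.ofGL_invFactor, one_mul, aeval_X]

theorem IsConeChart.aeval_chartPoint_cone (H : IsConeChart T f h g) (x : Fin n → K) :
    aeval (chartPoint T x) f = aeval x g := by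
  rw [aeval_chartPoint, H.pullback_cone, restrict_cone]

theorem IsConeChart.aeval_chartPoint_hyperplane (H : IsConeChart T f h g) (x : Fin n → K) :
    aeval (chartPoint T x) h = 0 := by
  rw [aeval_chartPoint, H.pullback_hyperplane, restrict_X_zero, map_zero]

end ChartPoint

namespace IsConeChart

variable {k : Type} [Field k] {K : Type*} [Field K] [Algebra k K] {n d e : ℕ}
  {f h q : MvPolynomial (Fin (n + 1)) k} {g : MvPolynomial (Fin n) k} {T : GL (Fin (n + 1)) k}
  {x : Fin n → K}

theorem exists_rep_eq_chartPoint (H : IsConeChart T f h g) {z : ProjSp k n}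
    (hz : z ∈ zeros k f ∩ zeros k h) :
    ∃ v : Fin n → k, v ≠ 0 ∧ eval v g = 0 ∧ z.rep = chartPoint T v := by
  obtain ⟨v, hv⟩ := H.exists_eq_chartPoint (η := z.rep) hz.2
  refine ⟨v, ?_, ?_, hv⟩
  · rw [← chartPoint_ne_zero_iff (T := T), ← hv]
    exact z.rep_nonzero
  · exact (H.aeval_chartPoint_cone v).symm.trans (hv ▸ hz.1)

theorem exists_not_dvd_X (H : IsConeChart T f h g) (hne : (zeros k f ∩ zeros k h).Nonempty) :
    ∃ i, ¬ g ∣ X i :=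
  have ⟨_, hz⟩ := hne
  have ⟨_, hv, hgv, _⟩ := H.exists_rep_eq_chartPoint hz
  exists_not_dvd_X_of_eval_eq_zero hv hgv

theorem inter_zeros_subset_iff [IsAlgClosed k] (H : IsConeChart T f h g) (hf : f.IsHomogeneous d)
    (hh : h.IsHomogeneous 1) (hprime : Prime g) {i : Fin n} (hi : ¬ g ∣ X i)
    (hq : q.IsHomogeneous e) : zeros k f ∩ zeros k h ⊆ zeros k q ↔
      g ∣ restrict ((CremonaMap.ofGL T).pullback q) := by
  rw [dvd_iff_forall_ne_zero_eval_eq_zero ((Ideal.span_singleton_prime hprime.ne_zero).2 hprime) hi]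
  constructor
  · intro hsub v hv hgv
    have hT := (chartPoint_ne_zero_iff (T := T)).2 hv
    refine (aeval_chartPoint T v q).symm.trans <|
      (mk_mem_zeros_iff hq hT).1 (hsub ⟨(mk_mem_zeros_iff hf hT).2 ?_,
        (mk_mem_zeros_iff hh hT).2 (H.aeval_chartPoint_hyperplane v)⟩)
    exact (H.aeval_chartPoint_cone v).trans hgv
  · intro hall z hz
    obtain ⟨v, hv, hgv, hzv⟩ := H.exists_rep_eq_chartPoint hz
    rw [zeros, Set.mem_ofPred_eq, hzv]
    exact (aeval_chartPoint T v q).trans (hall v hv hgv)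

theorem isGenericPoint_chartPoint_iff [IsAlgClosed k] (H : IsConeChart T f h g)
    (hf : f.IsHomogeneous d) (hh : h.IsHomogeneous 1) (hprime : Prime g) {i : Fin n}
    (hi : ¬ g ∣ X i) :
    IsGenericPoint (zeros k f ∩ zeros k h) (chartPoint T x) ↔ IsGenericZero g x := by
  constructor
  · intro hx e q hq
    have hq' := (CremonaMap.ofGL T).symm.pullback_isHomogeneous (isHomogeneous_cone hq)
    rw [← aeval_chartPoint_symm_pullback_cone T, hx hq',
      H.inter_zeros_subset_iff hf hh hprime hi hq', pullback_symm_pullback_ofGL, restrict_cone]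
  · intro hx e q hq
    rw [aeval_chartPoint, H.inter_zeros_subset_iff hf hh hprime hi hq]
    exact hx (isHomogeneous_restrict ((CremonaMap.ofGL T).pullback_isHomogeneous hq))

end IsConeChart

theorem IsGenericZero.ne_zero {k ι K : Type*} [Field k] [Field K] [Algebra k K]
    {f : MvPolynomial ι k} {x : ι → K} (hx : IsGenericZero f x) {i : ι} (hi : ¬ f ∣ X i) :
    x ≠ 0 := fun h0 => hi <| by
  rw [← hx (isHomogeneous_X k i), aeval_X, h0, Pi.zero_apply]

section BirationalSections

variable {k : Type} [Field k] [IsAlgClosed k] [CharZero k] {n d₁ d₂ : ℕ}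
  {f₁ f₂ h₁ h₂ : MvPolynomial (Fin (n + 1)) k} {g₁ g₂ : MvPolynomial (Fin n) k}
  {T₁ T₂ : GL (Fin (n + 1)) k}

theorem divisorEquiv_cone_of_birational (H₁ : IsConeChart T₁ f₁ h₁ g₁)
    (H₂ : IsConeChart T₂ f₂ h₂ g₂) (hf₁ : f₁.IsHomogeneous d₁) (hf₂ : f₂.IsHomogeneous d₂)
    (hh₁ : h₁.IsHomogeneous 1) (hh₂ : h₂.IsHomogeneous 1) (hg₁ : g₁.IsHomogeneous d₁)
    (hg₂ : g₂.IsHomogeneous d₂) (hp₁ : Prime g₁) (hp₂ : Prime g₂)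
    (hbir : Birational k (zeros k f₁ ∩ zeros k h₁) (zeros k f₂ ∩ zeros k h₂)) :
    DivisorEquiv (cone g₁) (cone g₂) := by
  obtain ⟨F, G, hFG⟩ := hbir
  obtain ⟨hne₁, hne₂⟩ := nonempty_of_isBirationalOn hFG
  obtain ⟨i, hi⟩ := H₁.exists_not_dvd_X hne₁
  obtain ⟨j, hj⟩ := H₂.exists_not_dvd_X hne₂
  obtain ⟨K, _, _, x, hxi, hx, hxg⟩ := exists_isGenericZero hp₁ hi
  obtain ⟨L, _, _, z, -, -, hzg⟩ := exists_isGenericZero hp₂ hj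
  have hξ : IsGenericPoint _ (chartPoint T₁ x) :=
    (H₁.isGenericPoint_chartPoint_iff hf₁ hh₁ hp₁ hi).2 hxg
  have hη := hξ.map ((H₂.isGenericPoint_chartPoint_iff hf₂ hh₂ hp₂ hj).2 hzg) hFG
  obtain ⟨c, hc, hGF⟩ := hξ.exists_aeval_comp_eq_mul hFG
  have hx1 : 1 ∈ Set.range x := ⟨i, hxi⟩
  have hηgen : Generates k fun i => aeval (chartPoint T₁ x) (F.comp i) :=
    (generates_chartPoint_iff.2 (.of_adjoin_eq_top hx1 hx)).of_eq_mul_aeval (c := c⁻¹) G.homog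
      fun i => by rw [hGF, inv_mul_cancel_left₀ hc]
  obtain ⟨y, hy⟩ := H₂.exists_eq_chartPoint ((hη hh₂).2 Set.inter_subset_right)
  rw [hy, H₂.isGenericPoint_chartPoint_iff hf₂ hh₂ hp₂ hj] at hη
  rw [hy, generates_chartPoint_iff] at hηgen
  have htrdeg := trdeg_add_two_le hxi hx hg₁ hp₁.ne_zero ((hxg hg₁).2 dvd_rfl)
  exact .cone_of_pointEquiv hg₁ hg₂ hp₁ hp₂ hxg hη (hxg.ne_zero hi) (hη.ne_zero hj)
    (.cons_zero_of_generates htrdeg hx1 hx (hη.ne_zero hj) hηgen)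

end BirationalSections

end Cremona

/-- Theorem `th:cone` of the paper.
Let `S₁` and `S₂` be two irreducible reduced cones in `ℙⁿ` over an algebraically
closed field of characteristic zero, with vertices `p₁`, `p₂`, and let
`Cᵢ = Sᵢ ∩ Hᵢ` be (general) hyperplane sections, where `Hᵢ` is a hyperplane not
passing through the vertex `pᵢ` (for a cone, all such sections are projectively
equivalent, so this is the general hyperplane section).  If `C₁` is birational to
`C₂` as abstract varieties, then `S₁` is Cremona equivalent to `S₂`. -/
theorem cones_cremonaEquivalent_of_birational_sections
    (k : Type) [Field k] [IsAlgClosed k] [CharZero k] (n : ℕ)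
    (S₁ S₂ : Set (ProjSp k n)) (p₁ p₂ : ProjSp k n) (H₁ H₂ : Set (ProjSp k n))
    (hS₁ : IsIrredDivisor k S₁) (hS₂ : IsIrredDivisor k S₂)
    (hcone₁ : IsConeWithVertex k S₁ p₁) (hcone₂ : IsConeWithVertex k S₂ p₂)
    (hH₁ : IsHyperplane k H₁) (hH₂ : IsHyperplane k H₂)
    (hp₁ : p₁ ∉ H₁) (hp₂ : p₂ ∉ H₂)
    (hbir : Birational k (S₁ ∩ H₁) (S₂ ∩ H₂)) :
    CremonaEquivalent k S₁ S₂ := by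
  obtain ⟨d₁, f₁, -, hf₁, hirr₁, rfl⟩ := hS₁
  obtain ⟨d₂, f₂, -, hf₂, hirr₂, rfl⟩ := hS₂
  obtain ⟨h₁, -, hh₁, rfl⟩ := hH₁
  obtain ⟨h₂, -, hh₂, rfl⟩ := hH₂
  obtain ⟨T₁, g₁, hg₁, hT₁⟩ := Cremona.exists_isConeChart hf₁ hirr₁.prime hh₁ hcone₁ hp₁
  obtain ⟨T₂, g₂, hg₂, hT₂⟩ := Cremona.exists_isConeChart hf₂ hirr₂.prime hh₂ hcone₂ hp₂
  have hcones : Cremona.DivisorEquiv (Cremona.cone g₁) (Cremona.cone g₂) :=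
    Cremona.divisorEquiv_cone_of_birational hT₁ hT₂ hf₁ hf₂ hh₁ hh₂ hg₁ hg₂
      (hT₁.prime hirr₁.prime) (hT₂.prime hirr₂.prime) hbir
  exact ((hT₁.divisorEquiv.symm.trans hcones).trans hT₂.divisorEquiv).cremonaEquivalent
    hf₁ hf₂ hirr₁.prime hirr₂.prime ⟨p₁, hcone₁.1⟩ ⟨p₂, hcone₂.1⟩
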